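/- Let ρ : Fin r → Equiv.Perm (Fin n) be a string C-group in the blocks-of-size-2 setup with m = n/2 ≥ 7 and r ≥ n/2. If the set R ∪ C has exactly 3 elements, then the image of φ is either all of Equiv.Perm (Fin m) or equal to alternatingGroup (Fin m). -/

import Mathlib

/-- A string group generated by involutions (sggi): each generator has order 2 and
nonconsecutive generators commute. -/
def IsSggi {n r : ℕ} (ρ : Fin r → Equiv.Perm (Fin n)) : Prop :=
  (∀ i, orderOf (ρ i) = 2) ∧
  ∀ i j : Fin r, 1 < |((i : ℕ) : ℤ) - ((j : ℕ) : ℤ)| → (ρ i * ρ j) ^ 2 = 1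

/-- A string C-group: an sggi satisfying the intersection property. -/
def IsStringC {n r : ℕ} (ρ : Fin r → Equiv.Perm (Fin n)) : Prop :=
  IsSggi ρ ∧ ∀ J K : Set (Fin r),
    Subgroup.closure (ρ '' J) ⊓ Subgroup.closure (ρ '' K) =
      Subgroup.closure (ρ '' (J ∩ K))

open Equiv.Perm

/-- Blocks of a primitive group, phrased through invariant equivalence relations. -/
theorem invariant_rel_trivial_or_total {Ω : Type*} {H : Subgroup (Equiv.Perm Ω)}
    (hH : MulAction.IsPreprimitive H Ω) {S : Ω → Ω → Prop} (hS : Equivalence S)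
    (hinv : ∀ h ∈ H, ∀ p q, S p q → S (h p) (h q)) :
    (∀ p q, S p q → p = q) ∨ ∀ p q, S p q := by
  by_contra! hcon
  obtain ⟨⟨p, q, hpq, hne⟩, p', q', hpq'⟩ := hcon
  have hB : MulAction.IsBlock H {x | S p x} := by
    rw [MulAction.isBlock_iff_smul_eq_of_mem]
    rintro ⟨g, hg⟩ a ha hga
    replace ha : S p a := ha
    replace hga : S p (g a) := hga
    have hpg : S p (g p) := hS.trans hga (hS.symm (hinv g hg _ _ ha))
    ext x
    rw [Set.mem_smul_set_iff_inv_smul_mem]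
    change S p (g⁻¹ x) ↔ S p x
    constructor
    · intro h
      have := hinv g hg _ _ h
      simp at this
      exact hS.trans hpg this
    · intro h
      have := hinv g⁻¹ (H.inv_mem hg) _ _ (hS.trans (hS.symm hpg) h)
      simpa using this
  rcases hB.subsingleton_or_eq_univ with h | h
  · exact hne (h (hS.refl p) hpq)
  · have h1 : S p p' := by
      have : p' ∈ {x | S p x} := h ▸ Set.mem_univ _
      exact this
    have h2 : S p q' := by
      have : q' ∈ {x | S p x} := h ▸ Set.mem_univ _
      exact this
    exact hpq' (hS.trans (hS.symm h1) h2)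

theorem alternatingGroup_le_of_card_support_le_three {Ω : Type*} [Fintype Ω] [DecidableEq Ω]
    {H : Subgroup (Equiv.Perm Ω)} (hH : MulAction.IsPreprimitive H Ω) {g : Equiv.Perm Ω}
    (hg : g ∈ H) (hg1 : g ≠ 1) (hcard : g.support.card ≤ 3) : alternatingGroup Ω ≤ H := by
  have h2 := two_le_card_support_of_ne_one hg1
  interval_cases h : g.support.card
  · rw [subgroup_eq_top_of_isPreprimitive_of_isSwap_mem hH g (card_support_eq_two.1 h) hg]
    exact le_top
  · exact alternatingGroup_le_of_isPreprimitive_of_isThreeCycle_mem hH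
      (card_support_eq_three_iff.1 h) hg

theorem eq_top_or_eq_alternatingGroup {Ω : Type*} [Fintype Ω] [DecidableEq Ω]
    {H : Subgroup (Equiv.Perm Ω)} (hH : alternatingGroup Ω ≤ H) :
    H = ⊤ ∨ H = alternatingGroup Ω := by
  by_cases h : H ≤ alternatingGroup Ω
  · exact Or.inr (le_antisymm h hH)
  left
  obtain ⟨g, hg, hgA⟩ := SetLike.not_le_iff_exists.1 h
  rw [mem_alternatingGroup] at hgA
  have hgs : sign g = -1 := (Int.units_eq_one_or _).resolve_left hgA
  rw [eq_top_iff]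
  intro σ _
  rcases Int.units_eq_one_or (sign σ) with hσ | hσ
  · exact hH (mem_alternatingGroup.2 hσ)
  · have : σ * g⁻¹ ∈ H := hH (mem_alternatingGroup.2 (by simp [hσ, hgs]))
    simpa using H.mul_mem this hg

/-- No nontrivial involution centralizes a primitive group of degree at least three. -/
theorem not_commute_of_isPreprimitive {Ω : Type*} [Fintype Ω] [DecidableEq Ω]
    (hΩ : 3 ≤ Fintype.card Ω) {H : Subgroup (Equiv.Perm Ω)}
    (hH : MulAction.IsPreprimitive H Ω) {g : Equiv.Perm Ω} (hg : g ^ 2 = 1) (hg1 : g ≠ 1) :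
    ∃ h ∈ H, ¬ Commute g h := by
  by_contra! hcon
  have hgg : ∀ x, g (g x) = x := fun x => by
    have := congrArg (fun f : Equiv.Perm Ω => f x) hg
    simpa [pow_two] using this
  have hS : Equivalence (fun p q : Ω => q = p ∨ q = g p) := by
    refine ⟨fun p => Or.inl rfl, ?_, ?_⟩
    · rintro p q (rfl | rfl)
      · simp
      · simp [hgg]
    · rintro p q s (rfl | rfl) (rfl | rfl) <;> simp [hgg]
  have hinv : ∀ h ∈ H, ∀ p q : Ω, (q = p ∨ q = g p) → (h q = h p ∨ h q = g (h p)) := by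
    rintro h hh p q (rfl | rfl)
    · simp
    · right
      have := congrArg (fun f : Equiv.Perm Ω => f p) (hcon h hh).eq
      simpa using this.symm
  rcases invariant_rel_trivial_or_total hH hS hinv with h | h
  · apply hg1
    ext p
    exact (h p (g p) (Or.inr rfl)).symm
  · have : Nonempty Ω := Fintype.card_pos_iff.1 (by omega)
    obtain ⟨p⟩ := this
    have : (Finset.univ : Finset Ω) ⊆ {p, g p} := by
      intro q _
      simpa using h p q
    have := Finset.card_le_card this
    have := Finset.card_le_two (a := p) (b := g p)
    simp at *
    omega

theorem commute_of_exponent_two {Ω : Type*} {E : Subgroup (Equiv.Perm Ω)} (hE : ∀ g ∈ E, g ^ 2 = 1)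
    {g h : Equiv.Perm Ω} (hg : g ∈ E) (hh : h ∈ E) : g * h = h * g := by
  have h1 := hE g hg
  have h2 := hE h hh
  have h3 := hE _ (E.mul_mem hg hh)
  rw [pow_two] at h1 h2 h3
  have e1 : g⁻¹ = g := inv_eq_of_mul_eq_one_right h1
  have e2 : h⁻¹ = h := inv_eq_of_mul_eq_one_right h2
  have e3 : (g * h)⁻¹ = g * h := inv_eq_of_mul_eq_one_right h3
  rw [mul_inv_rev, e1, e2] at e3
  exact e3.symm

section ElementaryAbelian

variable {Ω : Type*} [Fintype Ω] [DecidableEq Ω]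

open Classical in
/-- The orbit of a point under a permutation group, as a finite set. -/
noncomputable def orbitFinset (E : Subgroup (Equiv.Perm Ω)) (p : Ω) : Finset Ω :=
  Finset.univ.filter fun x => ∃ g ∈ E, g p = x

theorem mem_orbitFinset {E : Subgroup (Equiv.Perm Ω)} {p x : Ω} :
    x ∈ orbitFinset E p ↔ ∃ g ∈ E, g p = x := by
  simp [orbitFinset]

theorem self_mem_orbitFinset (E : Subgroup (Equiv.Perm Ω)) (p : Ω) : p ∈ orbitFinset E p :=
  mem_orbitFinset.2 ⟨1, E.one_mem, rfl⟩

theorem apply_mem_orbitFinset {E : Subgroup (Equiv.Perm Ω)} {p x : Ω} {g : Equiv.Perm Ω}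
    (hg : g ∈ E) (hx : x ∈ orbitFinset E p) : g x ∈ orbitFinset E p := by
  obtain ⟨h, hh, rfl⟩ := mem_orbitFinset.1 hx
  exact mem_orbitFinset.2 ⟨g * h, E.mul_mem hg hh, rfl⟩

theorem notMem_of_orbitFinset {E : Subgroup (Equiv.Perm Ω)} {p x : Ω} {g : Equiv.Perm Ω}
    (hg : g ∈ E) (hx : x ∉ orbitFinset E p) : g x ∉ orbitFinset E p := by
  intro h
  have := apply_mem_orbitFinset (E.inv_mem hg) h
  simp at this
  exact hx this

theorem card_eq_card_orbitFinset_mul (E : Subgroup (Equiv.Perm Ω)) (p : Ω) :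
    Nat.card E = (orbitFinset E p).card *
      Nat.card (E ⊓ MulAction.stabilizer (Equiv.Perm Ω) p : Subgroup (Equiv.Perm Ω)) := by
  have h := MulAction.index_stabilizer E p
  have h2 := (MulAction.stabilizer E p).index_mul_card
  rw [← h2, h]
  congr 1
  · rw [← Set.ncard_coe_finset]
    congr 1
    ext x
    simp only [Finset.mem_coe, mem_orbitFinset, MulAction.mem_orbit_iff, Subtype.exists]
    constructor
    · rintro ⟨g, hg, rfl⟩
      exact ⟨g, hg, rfl⟩
    · rintro ⟨g, hg, rfl⟩
      exact ⟨g, hg, rfl⟩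
  · refine Nat.card_congr ⟨fun g => ⟨g.1.1, g.1.2, g.2⟩, fun g => ⟨⟨g.1, g.2.1⟩, g.2.2⟩, ?_, ?_⟩
    · intro g; rfl
    · intro g; rfl

theorem fixes_orbitFinset {E : Subgroup (Equiv.Perm Ω)} (hE : ∀ g ∈ E, g ^ 2 = 1)
    {g : Equiv.Perm Ω} (hg : g ∈ E) {p x y : Ω} (hx : x ∈ orbitFinset E p)
    (hy : y ∈ orbitFinset E p) (hgx : g x = x) : g y = y := by
  obtain ⟨a, ha, rfl⟩ := mem_orbitFinset.1 hx
  obtain ⟨c, hc, rfl⟩ := mem_orbitFinset.1 hy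
  have hgp : g p = p := by
    apply a.injective
    have := congrArg (fun f : Equiv.Perm Ω => f p) (commute_of_exponent_two hE hg ha)
    simp only [coe_mul, Function.comp] at this
    rw [← this, hgx]
  have := congrArg (fun f : Equiv.Perm Ω => f p) (commute_of_exponent_two hE hg hc)
  simp only [coe_mul, Function.comp] at this
  rw [this, hgp]

theorem card_orbitFinset_eq_two_pow {E : Subgroup (Equiv.Perm Ω)} (hE : ∀ g ∈ E, g ^ 2 = 1)
    (p : Ω) : ∃ a, (orbitFinset E p).card = 2 ^ a := by
  have : Fact (Nat.Prime 2) := ⟨Nat.prime_two⟩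
  have hp : IsPGroup 2 E := fun g => ⟨1, by
    ext1
    simpa using hE g g.2⟩
  obtain ⟨n, hn⟩ := IsPGroup.iff_card.1 hp
  have : (orbitFinset E p).card ∣ 2 ^ n := by
    rw [← hn, card_eq_card_orbitFinset_mul E p]
    exact Dvd.intro _ rfl
  obtain ⟨a, -, ha⟩ := (Nat.dvd_prime_pow Nat.prime_two).1 this
  exact ⟨a, ha⟩

theorem sq_le_two_pow_of_pow (a : ℕ) : (2 ^ a) ^ 2 ≤ 2 ^ (2 ^ a) := by
  rw [← pow_mul]
  apply Nat.pow_le_pow_right (by norm_num)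
  rcases a with _ | a
  · simp
  · rw [pow_succ]
    have := Nat.lt_two_pow_self (n := a)
    omega

theorem four_mul_sq_le_two_pow {n : ℕ} (hn : 8 ≤ n) : 4 * n ^ 2 ≤ 2 ^ n := by
  induction n, hn using Nat.le_induction with
  | base => norm_num
  | succ k hk ih => rw [pow_succ 2 k]; nlinarith

/-- Each pair of points carries at most one bit of an elementary abelian `2`-group. -/
theorem card_sq_le_two_pow_mul {E : Subgroup (Equiv.Perm Ω)} (hE : ∀ g ∈ E, g ^ 2 = 1)
    (Δ : Finset Ω) (hΔ : ∀ g ∈ E, ∀ x ∈ Δ, g x ∈ Δ) :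
    Nat.card E ^ 2 ≤ 2 ^ Δ.card *
      Nat.card (E ⊓ fixingSubgroup (Equiv.Perm Ω) (Δ : Set Ω) : Subgroup (Equiv.Perm Ω)) ^ 2 := by
  induction hn : Δ.card using Nat.strong_induction_on generalizing Δ E with
  | _ n ih =>
    subst hn
    rcases Δ.eq_empty_or_nonempty with rfl | ⟨p, hp⟩
    · simp
    set O := orbitFinset E p with hO
    set F := E ⊓ MulAction.stabilizer (Equiv.Perm Ω) p with hF
    have hOΔ : O ⊆ Δ := by
      intro x hx
      obtain ⟨g, hg, rfl⟩ := mem_orbitFinset.1 hx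
      exact hΔ g hg p hp
    have hcard : (Δ \ O).card + O.card = Δ.card := Finset.card_sdiff_add_card_eq_card hOΔ
    have hOpos : 0 < O.card := Finset.card_pos.2 ⟨p, self_mem_orbitFinset E p⟩
    have h1 := ih (Δ \ O).card (by omega) (E := F) (fun g hg => hE g hg.1) (Δ \ O) (by
      intro g hg x hx
      rw [Finset.mem_sdiff] at hx ⊢
      exact ⟨hΔ g hg.1 x hx.1, notMem_of_orbitFinset hg.1 hx.2⟩) rfl
    have h2 : F ⊓ fixingSubgroup (Equiv.Perm Ω) ((Δ \ O : Finset Ω) : Set Ω) ≤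
        E ⊓ fixingSubgroup (Equiv.Perm Ω) (Δ : Set Ω) := by
      rintro g ⟨hg, hg2⟩
      refine ⟨hg.1, (mem_fixingSubgroup_iff _).2 ?_⟩
      replace hg2 := (mem_fixingSubgroup_iff _).1 hg2
      intro x hx
      by_cases hxO : x ∈ O
      · exact fixes_orbitFinset hE hg.1 (self_mem_orbitFinset E p) hxO hg.2
      · exact hg2 x (by simpa using ⟨hx, hxO⟩)
    have h3 := Subgroup.card_le_of_le h2
    rw [card_eq_card_orbitFinset_mul E p, mul_pow, ← hcard, pow_add]
    obtain ⟨a, ha⟩ := card_orbitFinset_eq_two_pow hE p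
    have h4 : O.card ^ 2 ≤ 2 ^ O.card := by
      rw [hO, ha]
      exact sq_le_two_pow_of_pow a
    calc O.card ^ 2 * Nat.card F ^ 2
        ≤ 2 ^ O.card * (2 ^ (Δ \ O).card * Nat.card (F ⊓ fixingSubgroup (Equiv.Perm Ω)
            ((Δ \ O : Finset Ω) : Set Ω) : Subgroup (Equiv.Perm Ω)) ^ 2) :=
          Nat.mul_le_mul h4 h1
      _ ≤ 2 ^ O.card * (2 ^ (Δ \ O).card * Nat.card (E ⊓ fixingSubgroup (Equiv.Perm Ω)
            (Δ : Set Ω) : Subgroup (Equiv.Perm Ω)) ^ 2) := by gcongr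
      _ = _ := by ring

theorem card_le_card_mul_card_stabilizer {E : Subgroup (Equiv.Perm Ω)} {p : Ω} {O : Finset Ω}
    (hO : ∀ g ∈ E, g p ∈ O) :
    Nat.card E ≤ O.card *
      Nat.card (E ⊓ MulAction.stabilizer (Equiv.Perm Ω) p : Subgroup (Equiv.Perm Ω)) := by
  rw [card_eq_card_orbitFinset_mul E p]
  gcongr
  intro x hx
  obtain ⟨g, hg, rfl⟩ := mem_orbitFinset.1 hx
  exact hO g hg

theorem card_sq_le_two_pow_of_forall_eq_one {E : Subgroup (Equiv.Perm Ω)}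
    (hE : ∀ g ∈ E, g ^ 2 = 1) (X : Finset Ω) (hX : ∀ g ∈ E, ∀ x ∈ X, g x ∈ X)
    (hfaith : ∀ g ∈ E, (∀ x ∉ X, g x = x) → g = 1) :
    Nat.card E ^ 2 * 2 ^ X.card ≤ 2 ^ Fintype.card Ω := by
  have hXc : ∀ g ∈ E, ∀ x ∈ Xᶜ, g x ∈ Xᶜ := by
    intro g hg x hx
    rw [Finset.mem_compl] at hx ⊢
    intro h
    have := hX _ (E.inv_mem hg) _ h
    simp at this
    exact hx this
  have h1 := card_sq_le_two_pow_mul hE Xᶜ hXc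
  have h2 : E ⊓ fixingSubgroup (Equiv.Perm Ω) ((Xᶜ : Finset Ω) : Set Ω) = ⊥ := by
    rw [eq_bot_iff]
    rintro g ⟨hg, hg2⟩
    replace hg2 := (mem_fixingSubgroup_iff _).1 hg2
    exact hfaith g hg fun x hx => hg2 x (by simpa using hx)
  rw [h2] at h1
  simp only [Subgroup.card_bot, one_pow, mul_one] at h1
  calc Nat.card E ^ 2 * 2 ^ X.card ≤ 2 ^ Xᶜ.card * 2 ^ X.card := by gcongr
    _ = 2 ^ Fintype.card Ω := by rw [← pow_add, Finset.card_compl_add_card]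

/-- An elementary abelian `2`-group of large rank contains an element of small degree, unless it
is of order eight and acts regularly outside of at most one point. -/
theorem exists_card_support_le_four_or_regular {E : Subgroup (Equiv.Perm Ω)}
    (hE : ∀ g ∈ E, g ^ 2 = 1) {j : ℕ} (hj : Nat.card E = 2 ^ j)
    (hΩ : Fintype.card Ω ≤ 2 * j + 3) (hΩ4 : 4 ≤ Fintype.card Ω) :
    (∃ g ∈ E, g ≠ 1 ∧ g.support.card ≤ 4) ∨
      (j = 3 ∧ ∃ p, (orbitFinset E p).card = 8 ∧
        ∀ g ∈ E, ∀ x ∈ orbitFinset E p, g x = x → g = 1) := by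
  rw [or_iff_not_imp_left]
  intro hno
  push Not at hno
  have hsmall : ∀ X : Finset Ω, X.card ≤ 4 → ∀ g ∈ E, (∀ x ∉ X, g x = x) → g = 1 := by
    intro X hX g hg hgX
    by_contra hg1
    have h1 := hno g hg hg1
    have h2 : g.support ⊆ X := by
      intro x hx
      by_contra hxX
      exact (mem_support.1 hx) (hgX x hxX)
    have := Finset.card_le_card h2
    omega
  have hinvO : ∀ p, ∀ g ∈ E, ∀ x ∈ orbitFinset E p, g x ∈ orbitFinset E p :=
    fun p g hg x hx => apply_mem_orbitFinset hg hx
  have hcard_ne_four : ∀ X : Finset Ω, (∀ g ∈ E, ∀ x ∈ X, g x ∈ X) → X.card ≠ 4 := by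
    intro X hX h4
    have h1 := card_sq_le_two_pow_of_forall_eq_one hE X hX (hsmall X h4.le)
    rw [hj, ← pow_mul, ← pow_add] at h1
    have := (Nat.pow_le_pow_iff_right (by norm_num)).1 h1
    omega
  have hdisj : ∀ p q, q ∉ orbitFinset E p → Disjoint (orbitFinset E p) (orbitFinset E q) := by
    intro p q hq
    rw [Finset.disjoint_left]
    intro x hx hxq
    obtain ⟨g, hg, rfl⟩ := mem_orbitFinset.1 hxq
    have := apply_mem_orbitFinset (E.inv_mem hg) hx
    simp at this
    exact hq this
  have hsize : ∀ p, (orbitFinset E p).card = 1 ∨ (orbitFinset E p).card = 2 ∨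
      8 ≤ (orbitFinset E p).card := by
    intro p
    obtain ⟨a, ha⟩ := card_orbitFinset_eq_two_pow hE p
    have h4 := hcard_ne_four _ (hinvO p)
    rcases a with _ | _ | _ | a
    · simp [ha]
    · simp [ha]
    · simp [ha] at h4
    · right; right
      rw [ha, pow_add]
      have := Nat.one_le_two_pow (n := a)
      omega
  have hone : ∀ p, (orbitFinset E p).card = 1 → ∀ g ∈ E, g p = p := by
    intro p hp g hg
    exact Finset.card_le_one.1 hp.le _ (apply_mem_orbitFinset hg (self_mem_orbitFinset E p)) _
      (self_mem_orbitFinset E p)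
  by_cases hbig : ∃ p, 8 ≤ (orbitFinset E p).card
  swap
  · -- all orbits have size at most two
    exfalso
    push Not at hbig
    have htriv : ∀ g ∈ E, g = 1 := by
      by_cases h2 : ∃ p, (orbitFinset E p).card = 2
      · obtain ⟨p, hp⟩ := h2
        intro g hg
        refine hsmall (orbitFinset E p) (by omega) g hg fun x hx => ?_
        rcases hsize x with h | h | h
        · exact hone x h g hg
        · exfalso
          refine hcard_ne_four (orbitFinset E p ∪ orbitFinset E x) ?_ ?_
          · intro k hk y hy
            rw [Finset.mem_union] at hy ⊢
            exact hy.imp (hinvO p k hk y) (hinvO x k hk y)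
          · rw [Finset.card_union_of_disjoint (hdisj p x hx), hp, h]
        · exact absurd h (by have := hbig x; omega)
      · push Not at h2
        intro g hg
        ext x
        rcases hsize x with h | h | h
        · exact hone x h g hg
        · exact absurd h (h2 x)
        · exact absurd h (by have := hbig x; omega)
    have : E = ⊥ := by
      rw [eq_bot_iff]
      intro g hg
      exact htriv g hg
    rw [this, Subgroup.card_bot] at hj
    have : j = 0 := by
      by_contra h0
      exact absurd hj.symm (Nat.one_lt_two_pow h0).ne'
    omega
  obtain ⟨p, hp⟩ := hbig
  set O := orbitFinset E p with hO
  set F := E ⊓ MulAction.stabilizer (Equiv.Perm Ω) p with hF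
  have hEF : Nat.card E = O.card * Nat.card F := card_eq_card_orbitFinset_mul E p
  have hFO : ∀ g ∈ F, ∀ x ∈ O, g x = x := fun g hg x hx =>
    fixes_orbitFinset hE hg.1 (self_mem_orbitFinset E p) hx hg.2
  have hO4 := four_mul_sq_le_two_pow hp
  have hinvU : ∀ X : Finset Ω, (∀ g ∈ E, ∀ x ∈ X, g x ∈ X) →
      ∀ g ∈ E, ∀ x ∈ O ∪ X, g x ∈ O ∪ X := by
    intro X hX g hg x hx
    rw [Finset.mem_union] at hx ⊢
    exact hx.imp (hinvO p g hg x) (hX g hg x)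
  have houtside : ∀ X : Finset Ω, (∀ g ∈ E, ∀ x ∈ X, g x ∈ X) → Disjoint O X → X.card ≤ 4 →
      X.card ≤ 1 := by
    intro X hX hOX h4
    have h1 := card_sq_le_two_pow_of_forall_eq_one (E := F) (fun g hg => hE g hg.1) (O ∪ X)
      (fun g hg => hinvU X hX g hg.1) (fun g hg hgx => hsmall X h4 g hg.1 fun x hx => by
        by_cases hxO : x ∈ O
        · exact hFO g hg x hxO
        · exact hgx x (by simp [hx, hxO]))
    rw [Finset.card_union_of_disjoint hOX, pow_add] at h1
    have h2 : 4 * Nat.card E ^ 2 * 2 ^ X.card ≤ 2 ^ Fintype.card Ω := by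
      refine le_trans ?_ h1
      rw [hEF]
      calc 4 * (O.card * Nat.card F) ^ 2 * 2 ^ X.card
          = (4 * O.card ^ 2) * (Nat.card F ^ 2 * 2 ^ X.card) := by ring
        _ ≤ 2 ^ O.card * (Nat.card F ^ 2 * 2 ^ X.card) := Nat.mul_le_mul_right _ hO4
        _ = _ := by ring
    rw [hj, ← pow_mul, show (4 : ℕ) = 2 ^ 2 by norm_num, ← pow_add, ← pow_add] at h2
    have := (Nat.pow_le_pow_iff_right (by norm_num)).1 h2
    omega
  have hfix : ∀ x ∉ O, (orbitFinset E x).card = 1 := by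
    intro x hx
    rcases hsize x with h | h | h
    · exact h
    · have := houtside _ (hinvO x) (hdisj p x hx) (by omega)
      omega
    · exfalso
      set O' := orbitFinset E x with hO'
      have hO4' := four_mul_sq_le_two_pow h
      set F' := F ⊓ MulAction.stabilizer (Equiv.Perm Ω) x with hF'
      have hFF' : Nat.card F ≤ O'.card * Nat.card F' :=
        card_le_card_mul_card_stabilizer fun g hg =>
          apply_mem_orbitFinset hg.1 (self_mem_orbitFinset E x)
      have h1 := card_sq_le_two_pow_of_forall_eq_one (E := F') (fun g hg => hE g hg.1.1) (O ∪ O')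
        (fun g hg => hinvU O' (hinvO x) g hg.1.1) (fun g hg hgx =>
          hsmall ∅ (by simp) g hg.1.1 fun y _ => by
            by_cases hyO : y ∈ O
            · exact hFO g hg.1 y hyO
            · by_cases hyO' : y ∈ O'
              · exact fixes_orbitFinset hE hg.1.1 (self_mem_orbitFinset E x) hyO' hg.2
              · exact hgx y (by simp [hyO, hyO']))
      rw [Finset.card_union_of_disjoint (hdisj p x hx), pow_add] at h1
      have h2 : 16 * Nat.card E ^ 2 ≤ 2 ^ Fintype.card Ω := by
        refine le_trans ?_ h1
        rw [hEF]
        calc 16 * (O.card * Nat.card F) ^ 2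
            ≤ 16 * (O.card * (O'.card * Nat.card F')) ^ 2 := by gcongr
          _ = Nat.card F' ^ 2 * ((4 * O.card ^ 2) * (4 * O'.card ^ 2)) := by ring
          _ ≤ Nat.card F' ^ 2 * (2 ^ O.card * 2 ^ O'.card) := by gcongr
      rw [hj, ← pow_mul, show (16 : ℕ) = 2 ^ 4 by norm_num, ← pow_add] at h2
      have := (Nat.pow_le_pow_iff_right (by norm_num)).1 h2
      omega
  have hOc : Oᶜ.card ≤ 1 := by
    rw [Finset.card_le_one]
    intro x hx y hy
    rw [Finset.mem_compl] at hx hy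
    by_contra hxy
    have := houtside {x, y} (by
      intro g hg z hz
      rw [Finset.mem_insert, Finset.mem_singleton] at hz ⊢
      rcases hz with rfl | rfl
      · exact Or.inl (hone _ (hfix _ hx) g hg)
      · exact Or.inr (hone _ (hfix _ hy) g hg)) (by
      simp [hx, hy]) (by rw [Finset.card_pair hxy]; norm_num)
    rw [Finset.card_pair hxy] at this
    omega
  have hfree : ∀ g ∈ E, ∀ x ∈ O, g x = x → g = 1 := by
    intro g hg x hx hgx
    refine hsmall Oᶜ (by omega) g hg fun y hy => ?_
    exact fixes_orbitFinset hE hg hx (by simpa using hy) hgx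
  have hFbot : F = ⊥ := by
    rw [eq_bot_iff]
    rintro g ⟨hg, hg2⟩
    exact hfree g hg p (self_mem_orbitFinset E p) hg2
  rw [hFbot, Subgroup.card_bot, mul_one, hj] at hEF
  have hle : O.card ≤ Fintype.card Ω := Finset.card_le_univ _
  have hj3 : j = 3 := by
    have h1 : 3 ≤ j := by
      by_contra h
      have : j ≤ 2 := by omega
      interval_cases j <;> omega
    by_contra h
    have h4 : 4 ≤ j := by omega
    have h5 : 2 * j + 3 < 2 ^ j := by
      clear * - h4
      induction j, h4 using Nat.le_induction with
      | base => norm_num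
      | succ k hk ih => rw [pow_succ]; omega
    omega
  subst hj3
  exact ⟨rfl, p, hEF.symm.trans (by norm_num), hfree⟩

end ElementaryAbelian

theorem apply_apply_of_sq_eq_one {Ω : Type*} {t : Equiv.Perm Ω} (ht : t ^ 2 = 1) (x : Ω) :
    t (t x) = x := by
  have := congrArg (fun f : Equiv.Perm Ω => f x) ht
  simpa [pow_two] using this

section Tetrads

variable {Ω : Type*} [Fintype Ω] [DecidableEq Ω]

/-- A four-element set is a tetrad of a permutation group if it is the support of an involution
of the group. -/
def IsTetrad (H : Subgroup (Equiv.Perm Ω)) (A : Finset Ω) : Prop :=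
  A.card = 4 ∧ ∃ t ∈ H, t ^ 2 = 1 ∧ t.support = A

variable {H : Subgroup (Equiv.Perm Ω)} {A B : Finset Ω}

theorem IsTetrad.map (hA : IsTetrad H A) {h : Equiv.Perm Ω} (hh : h ∈ H) :
    IsTetrad H (A.map h.toEmbedding) := by
  obtain ⟨h4, t, ht, ht2, hts⟩ := hA
  refine ⟨by rw [Finset.card_map, h4], h * t * h⁻¹, H.mul_mem (H.mul_mem hh ht) (H.inv_mem hh),
    ?_, ?_⟩
  · rw [conj_pow, ht2, mul_one, mul_inv_cancel]
  · rw [support_conj, hts]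

theorem IsTetrad.card_inter_ne_one (hsmall : ∀ g ∈ H, g.support.card ≤ 3 → g = 1)
    (hA : IsTetrad H A) (hB : IsTetrad H B) : (A ∩ B).card ≠ 1 := by
  intro h1
  obtain ⟨-, t, ht, ht2, rfl⟩ := hA
  obtain ⟨-, s, hs, hs2, rfl⟩ := hB
  obtain ⟨a, ha⟩ := Finset.card_eq_one.1 h1
  have htt := apply_apply_of_sq_eq_one ht2
  have hss := apply_apply_of_sq_eq_one hs2
  have key : ∀ x, t x ≠ x → s x ≠ x → x = a := fun x h1 h2 => by
    have : x ∈ t.support ∩ s.support := by simp [h1, h2]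
    simpa [ha] using this
  have haa : t a ≠ a ∧ s a ≠ a := by
    have : a ∈ t.support ∩ s.support := by simp [ha]
    simpa using this
  have hc := hsmall (s * t * s * t) (by
    exact H.mul_mem (H.mul_mem (H.mul_mem hs ht) hs) ht) (by
    refine (Finset.card_le_card ?_).trans (Finset.card_le_three (a := a) (b := s a) (c := t a))
    intro x hx
    by_contra hx'
    simp only [Finset.mem_insert, Finset.mem_singleton, not_or] at hx'
    obtain ⟨hxa, hxs, hxt⟩ := hx'
    rw [mem_support] at hx
    apply hx
    simp only [coe_mul, Function.comp]
    by_cases h1 : t x = x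
    · rw [h1]
      by_cases h2 : s x = x
      · rw [h2, h1, h2]
      · have : t (s x) = s x := by
          by_contra h3
          have := key (s x) h3 (by rw [hss]; exact Ne.symm h2)
          exact hxs (by rw [← this, hss])
        rw [this, hss]
    · have h2 : s (t x) = t x := by
        by_contra h3
        have := key (t x) (by rw [htt]; exact Ne.symm h1) h3
        exact hxt (by rw [← this, htt])
      rw [h2, htt]
      by_contra h3
      exact hxa (key x h1 h3))
  have := congrArg (fun f : Equiv.Perm Ω => f a) hc
  simp only [coe_mul, Function.comp, coe_one, id] at this
  have h2 : s (t a) = t a := by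
    by_contra h3
    exact haa.1 (key (t a) (by rw [htt]; exact Ne.symm haa.1) h3)
  rw [h2, htt] at this
  exact haa.2 this

/-- A primitive group containing a five-cycle is transitive on sets of size four. -/
theorem exists_map_eq_of_isCycle (hH : MulAction.IsPreprimitive H Ω) (hΩ : 7 ≤ Fintype.card Ω)
    {c : Equiv.Perm Ω} (hc : c ∈ H) (hcyc : c.IsCycle) (hc5 : c.support.card = 5)
    (hA : A.card = 4) (hB : B.card = 4) : ∃ h ∈ H, A.map h.toEmbedding = B := by
  have hcard : Nat.card Ω = Fintype.card Ω := Nat.card_eq_fintype_card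
  have := isPretransitive_of_isCycle_mem hcyc hc
  have hprim : MulAction.IsPreprimitive (fixingSubgroup H (c.support : Set Ω)ᶜ)
      (SubMulAction.ofFixingSubgroup H (c.support : Set Ω)ᶜ) := by
    classical
    apply MulAction.IsPreprimitive.of_prime_card
    convert! Nat.prime_five
    rw [Nat.card_eq_fintype_card, Fintype.card_subtype, ← hc5]
    apply congr_arg
    ext x
    simp [SubMulAction.mem_ofFixingSubgroup_iff]
  have hmult := hH.isMultiplyPreprimitive (s := (c.support : Set Ω)ᶜ)
    (n := Fintype.card Ω - 6) (by
      rw [Set.ncard_compl, Set.ncard_coe_finset, hc5, hcard]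
      omega) (by omega) hprim
  have hmt := hmult.isMultiplyPretransitive
  have hcA : Aᶜ.card = Fintype.card Ω - 6 + 2 := by rw [Finset.card_compl, hA]; omega
  have hcB : Bᶜ.card = Fintype.card Ω - 6 + 2 := by rw [Finset.card_compl, hB]; omega
  let x : Fin (Fintype.card Ω - 6 + 2) ↪ Ω :=
    (Aᶜ.equivFinOfCardEq hcA).symm.toEmbedding.trans (Function.Embedding.subtype _)
  let y : Fin (Fintype.card Ω - 6 + 2) ↪ Ω :=
    (Bᶜ.equivFinOfCardEq hcB).symm.toEmbedding.trans (Function.Embedding.subtype _)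
  obtain ⟨⟨h, hh⟩, hxy⟩ := hmt.exists_smul_eq x y
  refine ⟨h, hh, ?_⟩
  symm
  refine Finset.eq_of_subset_of_card_le ?_ (by rw [Finset.card_map, hA, hB])
  intro b hb
  refine Finset.mem_map.2 ⟨h⁻¹ b, ?_, by simp⟩
  by_contra hn
  have hn' : h⁻¹ b ∈ Aᶜ := Finset.mem_compl.2 hn
  have h1 := congrArg (fun f : Fin (Fintype.card Ω - 6 + 2) ↪ Ω =>
    f (Aᶜ.equivFinOfCardEq hcA ⟨_, hn'⟩)) hxy
  have h2 : b = y (Aᶜ.equivFinOfCardEq hcA ⟨_, hn'⟩) := by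
    rw [← h1]
    change b = h (x _)
    simp [x]
  have h3 : y (Aᶜ.equivFinOfCardEq hcA ⟨_, hn'⟩) ∈ Bᶜ := ((Bᶜ.equivFinOfCardEq hcB).symm _).2
  rw [← h2, Finset.mem_compl] at h3
  exact h3 hb

theorem IsTetrad.card_inter_ne_three (hH : MulAction.IsPreprimitive H Ω)
    (hΩ : 7 ≤ Fintype.card Ω) (hsmall : ∀ g ∈ H, g.support.card ≤ 3 → g = 1)
    (hA : IsTetrad H A) (hB : IsTetrad H B) : (A ∩ B).card ≠ 3 := by
  intro h3
  have hA0 := hA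
  obtain ⟨hA4, t, ht, ht2, hts⟩ := hA
  obtain ⟨hB4, s, hs, hs2, hss⟩ := hB
  have httt := apply_apply_of_sq_eq_one ht2
  have hsss := apply_apply_of_sq_eq_one hs2
  have hAm : ∀ x, x ∈ A ↔ t x ≠ x := fun x => by rw [← hts, mem_support]
  have hBm : ∀ x, x ∈ B ↔ s x ≠ x := fun x => by rw [← hss, mem_support]
  have hAi : ∀ x, x ∈ A → t x ∈ A := fun x hx => by
    rw [hAm, httt]
    exact Ne.symm ((hAm x).1 hx)
  have hBi : ∀ x, x ∈ B → s x ∈ B := fun x hx => by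
    rw [hBm, hsss]
    exact Ne.symm ((hBm x).1 hx)
  have hd : (A \ B).card = 1 := by
    have := Finset.card_sdiff_add_card_inter A B
    omega
  have hx : (B \ A).card = 1 := by
    have := Finset.card_sdiff_add_card_inter B A
    rw [Finset.inter_comm] at this
    omega
  obtain ⟨d, hd⟩ := Finset.card_eq_one.1 hd
  obtain ⟨x, hx⟩ := Finset.card_eq_one.1 hx
  have hdA : ∀ y, (y ∈ A ∧ y ∉ B) ↔ y = d := fun y => by
    rw [← Finset.mem_sdiff, hd, Finset.mem_singleton]
  have hxB : ∀ y, (y ∈ B ∧ y ∉ A) ↔ y = x := fun y => by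
    rw [← Finset.mem_sdiff, hx, Finset.mem_singleton]
  obtain ⟨hd1, hd2⟩ := (hdA d).2 rfl
  obtain ⟨hx1, hx2⟩ := (hxB x).2 rfl
  have htd1 := hAi d hd1
  have htd2 : t d ∈ B := by
    by_contra h
    exact (hAm d).1 hd1 ((hdA _).1 ⟨htd1, h⟩)
  have hsx1 := hBi x hx1
  have hsx2 : s x ∈ A := by
    by_contra h
    exact (hBm x).1 hx1 ((hxB _).1 ⟨hsx1, h⟩)
  have hdx : d ≠ x := fun h => hx2 (h ▸ hd1)
  have hsd : s d = d := by
    by_contra h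
    exact hd2 ((hBm d).2 h)
  have htx : t x = x := by
    by_contra h
    exact hx2 ((hAm x).2 h)
  obtain ⟨e, he⟩ : ∃ e, t d = e := ⟨_, rfl⟩
  obtain ⟨f, hf⟩ : ∃ f, s x = f := ⟨_, rfl⟩
  rw [he] at htd1 htd2
  rw [hf] at hsx1 hsx2
  have hte : t e = d := by rw [← he, httt]
  have hsf : s f = x := by rw [← hf, hsss]
  have hde : d ≠ e := fun h => hd2 (h ▸ htd2)
  have hdf : d ≠ f := fun h => hd2 (h ▸ hsx1)
  have hxe : x ≠ e := fun h => hx2 (h ▸ htd1)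
  have hxf : x ≠ f := fun h => hx2 (h ▸ hsx2)
  have hA' : ∀ y ∈ A, y ≠ e → t y ∈ B := by
    intro y hy hye
    by_contra h
    have := (hdA _).1 ⟨hAi y hy, h⟩
    exact hye (by rw [← he, ← this, httt])
  have hB' : ∀ y ∈ B, y ≠ f → s y ∈ A := by
    intro y hy hyf
    by_contra h
    have := (hxB _).1 ⟨hBi y hy, h⟩
    exact hyf (by rw [← hf, ← this, hsss])
  by_cases hef : e = f
  · subst hef
    have hc := hsmall (s * t) (H.mul_mem hs ht) (by
      refine (Finset.card_le_card ?_).trans (Finset.card_le_three (a := e) (b := d) (c := x))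
      intro y hy
      by_contra hy'
      simp only [Finset.mem_insert, Finset.mem_singleton, not_or] at hy'
      obtain ⟨hye, hyd, hyx⟩ := hy'
      rw [mem_support] at hy
      apply hy
      simp only [coe_mul, Function.comp]
      by_cases hyA : y ∈ A
      · have hyB : y ∈ B := by
          by_contra h
          exact hyd ((hdA y).1 ⟨hyA, h⟩)
        suffices h : t y = s y by rw [h, hsss]
        by_contra h
        have hsub : ({e, y, t y, s y} : Finset Ω) ⊆ A ∩ B := by
          intro w hw
          simp only [Finset.mem_insert, Finset.mem_singleton] at hw
          rw [Finset.mem_inter]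
          rcases hw with rfl | rfl | rfl | rfl
          · exact ⟨htd1, htd2⟩
          · exact ⟨hyA, hyB⟩
          · exact ⟨hAi y hyA, hA' y hyA hye⟩
          · exact ⟨hB' y hyB hye, hBi y hyB⟩
        have hle := Finset.card_le_card hsub
        have h1 : e ≠ t y := fun h => hyd (by rw [← hte, h, httt])
        have h2 : e ≠ s y := fun h => hyx (by rw [← hsf, h, hsss])
        rw [Finset.card_insert_of_notMem, Finset.card_insert_of_notMem, Finset.card_pair h] at hle
        · omega
        · simpa using ⟨Ne.symm ((hAm y).1 hyA), Ne.symm ((hBm y).1 hyB)⟩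
        · simpa using ⟨Ne.symm hye, h1, h2⟩
      · have hyB : y ∉ B := fun h => hyx ((hxB y).1 ⟨h, hyA⟩)
        have h1 : t y = y := by
          by_contra h
          exact hyA ((hAm y).2 h)
        have h2 : s y = y := by
          by_contra h
          exact hyB ((hBm y).2 h)
        rw [h1, h2])
    have := congrArg (fun f : Equiv.Perm Ω => f d) hc
    simp only [coe_mul, Function.comp, coe_one, id, he, hsf] at this
    exact hdx this.symm
  obtain ⟨g, hg⟩ : ∃ g, t f = g := ⟨_, rfl⟩
  have htg : t g = f := by rw [← hg, httt]
  have hgA : g ∈ A := hg ▸ hAi f hsx2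
  have hgB : g ∈ B := hg ▸ hA' f hsx2 (Ne.symm hef)
  have hge : g ≠ e := fun h => hdf (by rw [← hte, ← h, htg])
  have hgf : g ≠ f := fun h => (hAm f).1 hsx2 (by rw [hg, h])
  have hgd : g ≠ d := fun h => hd2 (h ▸ hgB)
  have hgx : g ≠ x := fun h => hx2 (h ▸ hgA)
  have hZ : A ∩ B = {e, f, g} := by
    symm
    refine Finset.eq_of_subset_of_card_le ?_ ?_
    · intro w hw
      simp only [Finset.mem_insert, Finset.mem_singleton] at hw
      rw [Finset.mem_inter]
      rcases hw with rfl | rfl | rfl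
      exacts [⟨htd1, htd2⟩, ⟨hsx2, hsx1⟩, ⟨hgA, hgB⟩]
    · rw [h3, Finset.card_eq_three.2 ⟨e, f, g, hef, Ne.symm hge, Ne.symm hgf, rfl⟩]
  have hse : s e = g := by
    have : s e ∈ A ∩ B := Finset.mem_inter.2 ⟨hB' e htd2 hef, hBi e htd2⟩
    rw [hZ, Finset.mem_insert, Finset.mem_insert, Finset.mem_singleton] at this
    rcases this with h | h | h
    · exact absurd h ((hBm e).1 htd2)
    · exact absurd (by rw [← hsf, ← h, hsss]) hxe
    · exact h
  have hsg : s g = e := by rw [← hse, hsss]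
  have c1 : (s * t) d = g := by rw [mul_apply, he, hse]
  have c2 : (s * t) g = x := by rw [mul_apply, htg, hsf]
  have c3 : (s * t) x = f := by rw [mul_apply, htx, hf]
  have c4 : (s * t) f = e := by rw [mul_apply, hg, hsg]
  have c5 : (s * t) e = d := by rw [mul_apply, hte, hsd]
  have hmoved : ∀ y, (s * t) y ≠ y → y = d ∨ y = g ∨ y = x ∨ y = f ∨ y = e := by
    intro y hy
    by_cases hyA : y ∈ A
    · by_cases hyB : y ∈ B
      · have : y ∈ A ∩ B := Finset.mem_inter.2 ⟨hyA, hyB⟩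
        rw [hZ, Finset.mem_insert, Finset.mem_insert, Finset.mem_singleton] at this
        tauto
      · exact Or.inl ((hdA y).1 ⟨hyA, hyB⟩)
    · by_cases hyB : y ∈ B
      · exact Or.inr (Or.inr (Or.inl ((hxB y).1 ⟨hyB, hyA⟩)))
      · exfalso
        apply hy
        have h1 : t y = y := by
          by_contra h
          exact hyA ((hAm y).2 h)
        have h2 : s y = y := by
          by_contra h
          exact hyB ((hBm y).2 h)
        rw [mul_apply, h1, h2]
  have hcyc : (s * t).IsCycle := by
    refine ⟨d, by rw [c1]; exact hgd, fun y hy => ?_⟩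
    have s1 : (s * t).SameCycle d g := ⟨1, by simpa using c1⟩
    have s2 : (s * t).SameCycle g x := ⟨1, by simpa using c2⟩
    have s3 : (s * t).SameCycle x f := ⟨1, by simpa using c3⟩
    have s4 : (s * t).SameCycle f e := ⟨1, by simpa using c4⟩
    rcases hmoved y hy with rfl | rfl | rfl | rfl | rfl
    · exact SameCycle.refl _ _
    · exact s1
    · exact s1.trans s2
    · exact (s1.trans s2).trans s3
    · exact ((s1.trans s2).trans s3).trans s4
  have hsupp : (s * t).support = {d, g, x, f, e} := by
    ext y
    rw [mem_support]
    simp only [Finset.mem_insert, Finset.mem_singleton]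
    refine ⟨hmoved y, ?_⟩
    rintro (rfl | rfl | rfl | rfl | rfl)
    · rw [c1]; exact hgd
    · rw [c2]; exact hgx.symm
    · rw [c3]; exact hxf.symm
    · rw [c4]; exact hef
    · rw [c5]; exact hde
  have h5 : (s * t).support.card = 5 := by
    rw [hsupp]
    rw [Finset.card_insert_of_notMem, Finset.card_insert_of_notMem, Finset.card_insert_of_notMem,
      Finset.card_pair (Ne.symm hef)]
    · simpa using ⟨hxf, hxe⟩
    · simpa using ⟨hgx, hgf, hge⟩
    · simpa using ⟨hgd.symm, hdx, hdf, hde⟩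
  obtain ⟨X, hXA, hX3⟩ := Finset.exists_subset_card_eq (s := Aᶜ) (n := 3)
    (by rw [Finset.card_compl, hA4]; omega)
  have hXd : d ∉ X := fun h => Finset.mem_compl.1 (hXA h) hd1
  obtain ⟨h, hh, hmap⟩ := exists_map_eq_of_isCycle hH hΩ (H.mul_mem hs ht) hcyc h5 hA4
    (B := insert d X) (by rw [Finset.card_insert_of_notMem hXd, hX3])
  refine IsTetrad.card_inter_ne_one hsmall hA0 (hA0.map hh) ?_
  rw [hmap, Finset.card_eq_one]
  refine ⟨d, ?_⟩
  ext y
  rw [Finset.mem_inter, Finset.mem_insert, Finset.mem_singleton]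
  constructor
  · rintro ⟨h1, h2 | h2⟩
    · exact h2
    · exact absurd h1 (Finset.mem_compl.1 (hXA h2))
  · rintro rfl
    exact ⟨hd1, Or.inl rfl⟩

end Tetrads

/-- The elementary abelian group of order eight. -/
abbrev Cube : Type := ZMod 2 × ZMod 2 × ZMod 2

/-- The standard bilinear form on the cube. -/
def cubeDot (f w : Cube) : ZMod 2 := f.1 * w.1 + f.2.1 * w.2.1 + f.2.2 * w.2.2

set_option maxRecDepth 100000 in
set_option maxHeartbeats 1000000 in
theorem exists_affine_of_sum_eq_zero : ∀ I : Finset Cube, I.card = 4 → ∑ x ∈ I, x = 0 →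
    ∃ f : Cube, ∃ c : ZMod 2, (∀ w, w ∈ I ↔ cubeDot f w + c = 1) ∧ (0 ∉ I → c = 0) := by
  decide

set_option maxRecDepth 100000 in
set_option maxHeartbeats 1000000 in
theorem card_inter_lines : ∀ I : Finset Cube, (0 ∉ I ∧ I.card = 3 ∧ ∑ x ∈ I, x = 0) →
    ∀ J : Finset Cube, (0 ∉ J ∧ J.card = 3 ∧ ∑ x ∈ J, x = 0) →
      (I ∩ J).card = 1 ∨ (I ∩ J).card = 3 := by
  decide

/-- The membership vector of a point with respect to three sets. -/
def cubeLabel {Ω : Type*} [DecidableEq Ω] (A B C : Finset Ω) (p : Ω) : Cube :=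
  (if p ∈ A then 1 else 0, if p ∈ B then 1 else 0, if p ∈ C then 1 else 0)

theorem existsUnique_cubeLabel {Ω : Type*} [DecidableEq Ω] {A B C : Finset Ω}
    (hA : A.card = 4) (hB : B.card = 4)
    (hC : C.card = 4) (hAB : (A ∩ B).card = 2) (hAC : (A ∩ C).card = 2) (hBC : (B ∩ C).card = 2)
    (hABC : (A ∩ B ∩ C).card = 1) (w : Cube) (hw : w ≠ 0) : ∃! p, cubeLabel A B C p = w := by
  have e1 := Finset.card_sdiff_add_card_inter (A ∩ B) C
  have e2 := Finset.card_sdiff_add_card_inter (A ∩ C) B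
  have e3 := Finset.card_sdiff_add_card_inter (B ∩ C) A
  have e4 := Finset.card_sdiff_add_card_inter A B
  have e5 := Finset.card_sdiff_add_card_inter B A
  have e6 := Finset.card_sdiff_add_card_inter C A
  have e7 := Finset.card_sdiff_add_card_inter (A \ B) C
  have e8 := Finset.card_sdiff_add_card_inter (B \ A) C
  have e9 := Finset.card_sdiff_add_card_inter (C \ A) B
  rw [show A ∩ C ∩ B = A ∩ B ∩ C by grind] at e2
  rw [show B ∩ C ∩ A = A ∩ B ∩ C by grind] at e3
  rw [Finset.inter_comm] at e5 e6
  rw [show (A \ B) ∩ C = (A ∩ C) \ B by grind] at e7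
  rw [show (B \ A) ∩ C = (B ∩ C) \ A by grind] at e8
  rw [show (C \ A) ∩ B = (B ∩ C) \ A by grind] at e9
  suffices h : ∃ X : Finset Ω, X.card = 1 ∧ ∀ p, p ∈ X ↔ cubeLabel A B C p = w by
    obtain ⟨X, hX, hXp⟩ := h
    obtain ⟨p, rfl⟩ := Finset.card_eq_one.1 hX
    exact ⟨p, (hXp p).1 (by simp), fun q hq => by simpa using (hXp q).2 hq⟩
  have h01 : ∀ c : ZMod 2, c = 0 ∨ c = 1 := by decide
  obtain ⟨a, b, c⟩ := w
  rcases h01 a with rfl | rfl <;> rcases h01 b with rfl | rfl <;> rcases h01 c with rfl | rfl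
  · exact absurd rfl hw
  · exact ⟨(C \ A) \ B, by omega, fun p => by simp [cubeLabel]; tauto⟩
  · exact ⟨(B \ A) \ C, by omega, fun p => by simp [cubeLabel]; tauto⟩
  · exact ⟨(B ∩ C) \ A, by omega, fun p => by simp [cubeLabel]; tauto⟩
  · exact ⟨(A \ B) \ C, by omega, fun p => by simp [cubeLabel]; tauto⟩
  · exact ⟨(A ∩ C) \ B, by omega, fun p => by simp [cubeLabel]; tauto⟩
  · exact ⟨(A ∩ B) \ C, by omega, fun p => by simp [cubeLabel]; tauto⟩
  · exact ⟨A ∩ B ∩ C, by omega, fun p => by simp [cubeLabel]⟩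

theorem sum_cubeLabel_eq_zero {Ω : Type*} [DecidableEq Ω]
    {A B C D : Finset Ω} (hA : Even (D ∩ A).card)
    (hB : Even (D ∩ B).card) (hC : Even (D ∩ C).card) : ∑ x ∈ D, cubeLabel A B C x = 0 := by
  have key : ∀ A : Finset Ω, Even (D ∩ A).card →
      ∑ x ∈ D, (if x ∈ A then (1 : ZMod 2) else 0) = 0 := by
    intro A hA
    rw [Finset.sum_ite_mem, Finset.sum_const, nsmul_one]
    exact (ZMod.natCast_eq_zero_iff_even).2 hA
  ext
  · simp only [cubeLabel, Prod.fst_sum]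
    exact key A hA
  · simp only [cubeLabel, Prod.fst_sum, Prod.snd_sum]
    exact key B hB
  · simp only [cubeLabel, Prod.snd_sum]
    exact key C hC

/-- The nonzero labels occurring in a set. -/
def nonzeroLabels {Ω : Type*} (l : Ω → Cube) (D : Finset Ω) : Finset Cube :=
  (D.filter fun x => l x ≠ 0).image l

theorem zero_notMem_nonzeroLabels {Ω : Type*} (l : Ω → Cube) (D : Finset Ω) :
    0 ∉ nonzeroLabels l D := by
  simp only [nonzeroLabels, Finset.mem_image, Finset.mem_filter, not_exists, not_and]
  exact fun x hx h => hx.2 h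

theorem card_nonzeroLabels {Ω : Type*} {l : Ω → Cube}
    (hl : ∀ x y, l x ≠ 0 → l x = l y → x = y)
    (D : Finset Ω) : (nonzeroLabels l D).card = (D.filter fun x => l x ≠ 0).card := by
  refine Finset.card_image_of_injOn fun x hx y hy hxy => ?_
  exact hl x y (Finset.mem_filter.1 hx).2 hxy

theorem sum_nonzeroLabels {Ω : Type*} {l : Ω → Cube}
    (hl : ∀ x y, l x ≠ 0 → l x = l y → x = y)
    (D : Finset Ω) : ∑ w ∈ nonzeroLabels l D, w = ∑ x ∈ D, l x := by
  rw [nonzeroLabels, Finset.sum_image (fun x hx y hy hxy => ?_), Finset.sum_filter_ne_zero]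
  exact hl x y (Finset.mem_filter.1 hx).2 hxy

theorem nonzeroLabels_inter {Ω : Type*} [DecidableEq Ω] {l : Ω → Cube}
    (hl : ∀ x y, l x ≠ 0 → l x = l y → x = y)
    (D D' : Finset Ω) :
    nonzeroLabels l (D ∩ D') = nonzeroLabels l D ∩ nonzeroLabels l D' := by
  ext w
  simp only [nonzeroLabels, Finset.mem_image, Finset.mem_filter, Finset.mem_inter]
  constructor
  · rintro ⟨x, ⟨⟨h1, h2⟩, h3⟩, rfl⟩
    exact ⟨⟨x, ⟨h1, h3⟩, rfl⟩, ⟨x, ⟨h2, h3⟩, rfl⟩⟩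
  · rintro ⟨⟨x, ⟨h1, h3⟩, rfl⟩, ⟨y, ⟨h4, h5⟩, h6⟩⟩
    have := hl y x h5 h6
    subst this
    exact ⟨y, ⟨⟨h1, h4⟩, h3⟩, rfl⟩

set_option maxRecDepth 100000 in
theorem card_eq_zero_or_three_le : ∀ I : Finset Cube, 0 ∉ I → ∑ x ∈ I, x = 0 →
    I.card = 0 ∨ 3 ≤ I.card := by
  decide

section AffineStructure

variable {Ω : Type*} [Fintype Ω] [DecidableEq Ω] {H : Subgroup (Equiv.Perm Ω)}

/-- Points of a primitive set are separated by tetrads. -/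
theorem exists_isTetrad_separating (hH : MulAction.IsPreprimitive H Ω)
    (hΩ : 7 ≤ Fintype.card Ω) {A : Finset Ω} (hA : IsTetrad H A) {p q : Ω} (hpq : p ≠ q) :
    ∃ B, IsTetrad H B ∧ ¬ (p ∈ B ↔ q ∈ B) := by
  by_contra! hcon
  have hS : Equivalence fun p q : Ω => ∀ B, IsTetrad H B → (p ∈ B ↔ q ∈ B) :=
    ⟨fun p B _ => Iff.rfl, fun h B hB => (h B hB).symm, fun h h' B hB => (h B hB).trans (h' B hB)⟩
  rcases invariant_rel_trivial_or_total hH hS (fun h hh p q hpq B hB => by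
      have := hpq _ (hB.map (H.inv_mem hh))
      rwa [Finset.mem_map_equiv, Finset.mem_map_equiv] at this) with h | h
  · exact hpq (h p q hcon)
  · obtain ⟨x, hx⟩ := Finset.card_pos.1 (by rw [hA.1]; norm_num)
    have : A = Finset.univ := by
      ext y
      simpa using (h x y A hA).1 hx
    have h4 := hA.1
    rw [this, Finset.card_univ] at h4
    omega

/-- No proper nonempty set is a union of tetrads and points outside all tetrads. -/
theorem exists_isTetrad_crossing (hH : MulAction.IsPreprimitive H Ω) {A : Finset Ω}
    (hA : IsTetrad H A) (V : Finset Ω) {v w : Ω} (hv : v ∈ V) (hw : w ∉ V) :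
    ∃ B, IsTetrad H B ∧ (∃ x ∈ B, x ∈ V) ∧ ∃ y ∈ B, y ∉ V := by
  by_contra! hcon
  have hS : Equivalence fun p q : Ω => ∀ h ∈ H, (h p ∈ V ↔ h q ∈ V) :=
    ⟨fun p h _ => Iff.rfl, fun h B hB => (h B hB).symm, fun h h' B hB => (h B hB).trans (h' B hB)⟩
  rcases invariant_rel_trivial_or_total hH hS (fun h hh p q hpq g hg =>
      hpq (g * h) (H.mul_mem hg hh)) with h | h
  · obtain ⟨x, y, hx, hy, hxy⟩ := Finset.one_lt_card_iff.1 (by rw [hA.1]; norm_num : 1 < A.card)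
    refine hxy (h x y fun g hg => ?_)
    have hgx : g x ∈ A.map g.toEmbedding := Finset.mem_map.2 ⟨x, hx, rfl⟩
    have hgy : g y ∈ A.map g.toEmbedding := Finset.mem_map.2 ⟨y, hy, rfl⟩
    exact ⟨fun h' => hcon _ (hA.map hg) ⟨g x, hgx, h'⟩ _ hgy,
      fun h' => hcon _ (hA.map hg) ⟨g y, hgy, h'⟩ _ hgx⟩
  · exact hw ((h v w 1 H.one_mem).1 hv)

theorem IsTetrad.even_card_inter (hH : MulAction.IsPreprimitive H Ω)
    (hΩ : 7 ≤ Fintype.card Ω) (hsmall : ∀ g ∈ H, g.support.card ≤ 3 → g = 1) {A B : Finset Ω}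
    (hA : IsTetrad H A) (hB : IsTetrad H B) : Even (A ∩ B).card := by
  have h1 := hA.card_inter_ne_one hsmall hB
  have h3 := hA.card_inter_ne_three hH hΩ hsmall hB
  have h4 : (A ∩ B).card ≤ 4 := hA.1 ▸ Finset.card_le_card Finset.inter_subset_left
  interval_cases (A ∩ B).card <;> first | decide | contradiction

theorem IsTetrad.card_inter_eq_two (hH : MulAction.IsPreprimitive H Ω)
    (hΩ : 7 ≤ Fintype.card Ω) (hsmall : ∀ g ∈ H, g.support.card ≤ 3 → g = 1) {A B : Finset Ω}
    (hA : IsTetrad H A) (hB : IsTetrad H B) {p q : Ω} (hp : p ∈ A) (hq : q ∈ A)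
    (hpq : ¬ (p ∈ B ↔ q ∈ B)) : (A ∩ B).card = 2 := by
  obtain ⟨c, hc⟩ := hA.even_card_inter hH hΩ hsmall hB
  have h0 : 0 < (A ∩ B).card := by
    rw [Finset.card_pos]
    by_cases h : p ∈ B
    · exact ⟨p, Finset.mem_inter.2 ⟨hp, h⟩⟩
    · exact ⟨q, Finset.mem_inter.2 ⟨hq, by tauto⟩⟩
  have h4 : (A ∩ B).card < A.card := by
    refine Finset.card_lt_card ⟨Finset.inter_subset_left, fun h => hpq ?_⟩
    exact ⟨fun _ => (Finset.mem_inter.1 (h hq)).2, fun _ => (Finset.mem_inter.1 (h hp)).2⟩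
  rw [hA.1] at h4
  omega

theorem exists_three_isTetrad (hH : MulAction.IsPreprimitive H Ω)
    (hΩ : 7 ≤ Fintype.card Ω) (hsmall : ∀ g ∈ H, g.support.card ≤ 3 → g = 1) {A : Finset Ω}
    (hA : IsTetrad H A) : ∃ B C, IsTetrad H B ∧ IsTetrad H C ∧ (A ∩ B).card = 2 ∧
      (A ∩ C).card = 2 ∧ (B ∩ C).card = 2 ∧ (A ∩ B ∩ C).card = 1 := by
  obtain ⟨x, y, hx, hy, hxy⟩ := Finset.one_lt_card_iff.1 (by rw [hA.1]; norm_num : 1 < A.card)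
  obtain ⟨B, hB, hBxy⟩ := exists_isTetrad_separating hH hΩ hA hxy
  have hAB := hA.card_inter_eq_two hH hΩ hsmall hB hx hy hBxy
  obtain ⟨p, q, hpq, hZ⟩ := Finset.card_eq_two.1 hAB
  have hp : p ∈ A ∩ B := by simp [hZ]
  have hq : q ∈ A ∩ B := by simp [hZ]
  rw [Finset.mem_inter] at hp hq
  obtain ⟨C, hC, hCpq⟩ := exists_isTetrad_separating hH hΩ hA hpq
  refine ⟨B, C, hB, hC, hAB, hA.card_inter_eq_two hH hΩ hsmall hC hp.1 hq.1 hCpq,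
    hB.card_inter_eq_two hH hΩ hsmall hC hp.2 hq.2 hCpq, ?_⟩
  rw [hZ, Finset.card_eq_one]
  by_cases h : p ∈ C
  · exact ⟨p, by ext z; simp only [Finset.mem_inter, Finset.mem_insert, Finset.mem_singleton]; grind⟩
  · exact ⟨q, by ext z; simp only [Finset.mem_inter, Finset.mem_insert, Finset.mem_singleton]; grind⟩

/-- A labelling that is injective on nonzero labels and sums to zero on every tetrad takes the
value zero at most once. -/
theorem eq_of_label_eq_zero (hH : MulAction.IsPreprimitive H Ω)
    (hΩ : 7 ≤ Fintype.card Ω) (hsmall : ∀ g ∈ H, g.support.card ≤ 3 → g = 1) {A : Finset Ω}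
    (hA : IsTetrad H A) {l : Ω → Cube} (hl : ∀ x y, l x ≠ 0 → l x = l y → x = y)
    (hne : ∃ x, l x ≠ 0) (hsum : ∀ D, IsTetrad H D → ∑ x ∈ D, l x = 0) :
    ∀ x y, l x = 0 → l y = 0 → x = y := by
  intro x₀ y₀ hx₀ hy₀
  by_contra hxy
  have hthree : ∀ D, IsTetrad H D → (∃ x ∈ D, l x = 0) → (∃ x ∈ D, l x ≠ 0) →
      (nonzeroLabels l D).card = 3 ∧ (D.filter fun x => l x = 0).card = 1 := by
    rintro D hD ⟨x, hxD, hx⟩ ⟨y, hyD, hy⟩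
    have h1 := card_eq_zero_or_three_le _ (zero_notMem_nonzeroLabels l D)
      ((sum_nonzeroLabels hl D).trans (hsum D hD))
    have h2 := Finset.card_filter_add_card_filter_not (s := D) (fun x => l x = 0)
    rw [← card_nonzeroLabels hl, hD.1] at h2
    have h3 : 0 < (D.filter fun x => l x = 0).card :=
      Finset.card_pos.2 ⟨x, Finset.mem_filter.2 ⟨hxD, hx⟩⟩
    have h4 : 0 < (nonzeroLabels l D).card := by
      rw [card_nonzeroLabels hl]
      exact Finset.card_pos.2 ⟨y, Finset.mem_filter.2 ⟨hyD, hy⟩⟩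
    omega
  obtain ⟨v, hv⟩ := hne
  obtain ⟨D, hD, ⟨x, hxD, hx⟩, y, hyD, hy⟩ := exists_isTetrad_crossing hH hA
    (Finset.univ.filter fun x => l x ≠ 0) (v := v) (w := x₀) (by simpa using hv) (by simpa using hx₀)
  have hx' : l x ≠ 0 := by simpa using hx
  have hy' : l y = 0 := by simpa using hy
  obtain ⟨hD3, hD1⟩ := hthree D hD ⟨y, hyD, hy'⟩ ⟨x, hxD, hx'⟩
  have hDy : ∀ z ∈ D, l z = 0 → z = y := by
    intro z hz hz0
    obtain ⟨u, hu⟩ := Finset.card_eq_one.1 hD1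
    have h1 : z ∈ ({u} : Finset Ω) := hu ▸ Finset.mem_filter.2 ⟨hz, hz0⟩
    have h2 : y ∈ ({u} : Finset Ω) := hu ▸ Finset.mem_filter.2 ⟨hyD, hy'⟩
    rw [Finset.mem_singleton] at h1 h2
    rw [h1, h2]
  obtain ⟨w, hwy, hw0⟩ : ∃ w, w ≠ y ∧ l w = 0 := by
    by_cases h : x₀ = y
    · exact ⟨y₀, fun h' => hxy (h.trans h'.symm), hy₀⟩
    · exact ⟨x₀, h, hx₀⟩
  obtain ⟨D', hD', ⟨z, hzD, hz⟩, u, huD, hu⟩ := exists_isTetrad_crossing hH hA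
    (Finset.univ.filter fun x => l x ≠ 0 ∨ x = y) (v := v) (w := w) (by simp [hv])
    (by simp [hw0, hwy])
  have hz' : l z ≠ 0 ∨ z = y := by simpa using hz
  have hu' : l u = 0 ∧ u ≠ y := by simpa using hu
  have hcount := Finset.card_filter_add_card_filter_not (s := D ∩ D') (fun x => l x = 0)
  rw [← card_nonzeroLabels hl, nonzeroLabels_inter hl] at hcount
  have heven := hD.even_card_inter hH hΩ hsmall hD'
  rw [← hcount] at heven
  by_cases hD'0 : ∃ x ∈ D', l x ≠ 0
  · obtain ⟨hD'3, hD'1⟩ := hthree D' hD' ⟨u, huD, hu'.1⟩ hD'0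
    have hempty : ((D ∩ D').filter fun x => l x = 0).card = 0 := by
      rw [Finset.card_eq_zero, Finset.filter_eq_empty_iff]
      intro t ht ht0
      rw [Finset.mem_inter] at ht
      have := hDy t ht.1 ht0
      subst this
      have := Finset.card_le_one.1 hD'1.le t (Finset.mem_filter.2 ⟨ht.2, hy'⟩) u
        (Finset.mem_filter.2 ⟨huD, hu'.1⟩)
      exact hu'.2 this.symm
    rw [hempty, zero_add] at heven
    rcases card_inter_lines _ ⟨zero_notMem_nonzeroLabels l D, hD3,
      (sum_nonzeroLabels hl D).trans (hsum D hD)⟩ _ ⟨zero_notMem_nonzeroLabels l D', hD'3,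
      (sum_nonzeroLabels hl D').trans (hsum D' hD')⟩ with h | h <;> rw [h] at heven <;>
      revert heven <;> decide
  · push Not at hD'0
    have hzy : z = y := hz'.resolve_left (by simpa using hD'0 z hzD)
    subst hzy
    refine hD.card_inter_ne_one hsmall hD' (Finset.card_eq_one.2 ⟨z, ?_⟩)
    ext t
    rw [Finset.mem_inter, Finset.mem_singleton]
    constructor
    · rintro ⟨h1, h2⟩
      exact hDy t h1 (hD'0 t h2)
    · rintro rfl
      exact ⟨hyD, hzD⟩

theorem cubeDot_add (f w w' : Cube) : cubeDot f (w + w') = cubeDot f w + cubeDot f w' := by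
  simp only [cubeDot, Prod.fst_add, Prod.snd_add]
  ring

/-- A primitive group of degree at least seven that contains an involution of support four, but
no nontrivial element of support at most three, acts affinely on a subset of the cube. -/
theorem exists_affine_structure (hH : MulAction.IsPreprimitive H Ω)
    (hΩ : 7 ≤ Fintype.card Ω) (hsmall : ∀ g ∈ H, g.support.card ≤ 3 → g = 1) {A : Finset Ω}
    (hA : IsTetrad H A) :
    ∃ (l : Ω → Cube) (M : Equiv.Perm Ω → Cube →+ Cube), Function.Injective l ∧
      (∀ w, ∃ p q, w = l p + l q) ∧
      (∀ h ∈ H, ∀ p q, M h (l p + l q) = l (h p) + l (h q)) ∧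
      (Fintype.card Ω = 7 → ∀ h ∈ H, ∀ p, M h (l p) = l (h p)) := by
  obtain ⟨B, C, hB, hC, hAB, hAC, hBC, hABC⟩ := exists_three_isTetrad hH hΩ hsmall hA
  set l := cubeLabel A B C with hldef
  have huniq : ∀ w, w ≠ 0 → ∃! p, l p = w :=
    existsUnique_cubeLabel hA.1 hB.1 hC.1 hAB hAC hBC hABC
  have hl : ∀ x y, l x ≠ 0 → l x = l y → x = y := fun x y hx hxy =>
    (huniq _ hx).unique rfl hxy.symm
  have hsum : ∀ D, IsTetrad H D → ∑ x ∈ D, l x = 0 := fun D hD =>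
    sum_cubeLabel_eq_zero (hD.even_card_inter hH hΩ hsmall hA)
      (hD.even_card_inter hH hΩ hsmall hB) (hD.even_card_inter hH hΩ hsmall hC)
  obtain ⟨p₁, hp₁, -⟩ := huniq (1, 0, 0) (by decide)
  have hzero := eq_of_label_eq_zero hH hΩ hsmall hA hl ⟨p₁, by rw [hp₁]; decide⟩ hsum
  have hinj : Function.Injective l := by
    intro x y hxy
    by_cases hx : l x = 0
    · exact hzero x y hx (hxy ▸ hx)
    · exact hl x y hx hxy
  have haff : ∀ D, IsTetrad H D → ∃ f : Cube, ∃ c : ZMod 2,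
      (∀ p, (if p ∈ D then (1 : ZMod 2) else 0) = cubeDot f (l p) + c) ∧
        ((∀ p, l p ≠ 0) → c = 0) := by
    intro D hD
    obtain ⟨f, c, h1, h2⟩ := exists_affine_of_sum_eq_zero (D.image l)
      (by rw [Finset.card_image_of_injective _ hinj, hD.1])
      (by rw [Finset.sum_image hinj.injOn]; exact hsum D hD)
    refine ⟨f, c, fun p => ?_, fun h => h2 (by simpa using fun x _ => h x)⟩
    have hp := h1 (l p)
    rw [Finset.mem_image] at hp
    have h01 : ∀ c : ZMod 2, c = 0 ∨ c = 1 := by decide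
    split_ifs with h
    · exact (hp.1 ⟨p, h, rfl⟩).symm
    · refine ((h01 _).resolve_right fun h' => h ?_).symm
      obtain ⟨q, hq, hqp⟩ := hp.2 h'
      exact hinj hqp ▸ hq
  have hmaps : ∀ h : Equiv.Perm Ω, ∃ (M : Cube →+ Cube) (c : Cube), h ∈ H →
      (∀ p, l (h p) = M (l p) + c) ∧ ((∀ p, l p ≠ 0) → c = 0) := by
    intro h
    by_cases hh : h ∈ H
    swap
    · exact ⟨0, 0, fun h' => absurd h' hh⟩
    obtain ⟨f₁, c₁, h₁, h₁'⟩ := haff _ (hA.map (H.inv_mem hh))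
    obtain ⟨f₂, c₂, h₂, h₂'⟩ := haff _ (hB.map (H.inv_mem hh))
    obtain ⟨f₃, c₃, h₃, h₃'⟩ := haff _ (hC.map (H.inv_mem hh))
    refine ⟨AddMonoidHom.mk' (fun w => (cubeDot f₁ w, cubeDot f₂ w, cubeDot f₃ w)) fun w w' => by
      simp only [cubeDot_add]; rfl, (c₁, c₂, c₃), fun _ => ⟨fun p => ?_, fun h0 => ?_⟩⟩
    · have hmem : ∀ X : Finset Ω, p ∈ X.map (h⁻¹ : Equiv.Perm Ω).toEmbedding ↔ h p ∈ X :=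
        fun X => Finset.mem_map_equiv
      have e₁ := h₁ p
      have e₂ := h₂ p
      have e₃ := h₃ p
      simp only [hmem] at e₁ e₂ e₃
      change (_, _, _) = (_, _, _)
      rw [e₁, e₂, e₃]
      rfl
    · rw [h₁' h0, h₂' h0, h₃' h0]
      rfl
  choose M c hM using hmaps
  have hchar : ∀ w : Cube, w + w = 0 := by decide
  refine ⟨l, M, hinj, fun w => ?_, fun h hh p q => ?_, fun h7 h hh p => ?_⟩
  · by_cases hw : w = 0
    · exact ⟨p₁, p₁, by rw [hw, hchar]⟩
    · have : ∀ w : Cube, w ≠ 0 → ∃ a b : Cube, a ≠ 0 ∧ b ≠ 0 ∧ w = a + b := by decide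
      obtain ⟨a, b, ha, hb, rfl⟩ := this w hw
      obtain ⟨p, hp, -⟩ := huniq a ha
      obtain ⟨q, hq, -⟩ := huniq b hb
      exact ⟨p, q, by rw [hp, hq]⟩
  · rw [map_add, (hM h hh).1 p, (hM h hh).1 q, add_add_add_comm, hchar, add_zero]
  · have hne : ∀ p, l p ≠ 0 := by
      intro p hp
      have hsurj : Function.Surjective l := fun w => by
        by_cases hw : w = 0
        · exact ⟨p, by rw [hp, hw]⟩
        · exact (huniq w hw).exists
      have := Fintype.card_le_of_surjective l hsurj
      rw [h7] at this
      revert this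
      decide
    rw [(hM h hh).1 p, (hM h hh).2 hne, add_zero]

end AffineStructure

/-- In the general linear group of the cube, the centralizer of an involution `c` only contains
elements `x` with `x ^ 2 ∈ {1, c}`. -/
theorem sq_eq_self_or_eq_of_comm {c x : Cube →+ Cube} (hc2 : ∀ w, c (c w) = w)
    (hc1 : ∃ w, c w ≠ w) (hx : Function.Injective x) (hcx : ∀ w, c (x w) = x (c w)) :
    (∀ w, x (x w) = w) ∨ ∀ w, x (x w) = c w := by
  have hchar : ∀ w : Cube, w + w = 0 := by decide
  have hzero : ∀ a b : Cube, a + b = 0 → a = b := by decide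
  obtain ⟨n, hn⟩ : ∃ n : Cube →+ Cube, ∀ w, n w = c w + w := ⟨c + AddMonoidHom.id _, fun _ => rfl⟩
  obtain ⟨y, hy⟩ : ∃ y : Cube →+ Cube, ∀ w, y w = x w + w := ⟨x + AddMonoidHom.id _, fun _ => rfl⟩
  have hnn : ∀ w, n (n w) = 0 := fun w => by
    rw [hn (n w), hn w, map_add, hc2, add_comm (c w), hchar]
  obtain ⟨w₀, hw₀⟩ := hc1
  obtain ⟨v, hv⟩ : ∃ v, n w₀ = v := ⟨_, rfl⟩
  have hv0 : v ≠ 0 := fun h => hw₀ (hzero _ _ (by rw [← hn, hv, h]))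
  have hnv : n v = 0 := hv ▸ hnn w₀
  have hcard : Nat.card n.ker * Nat.card n.range = 8 := by
    rw [← AddSubgroup.index_ker, AddSubgroup.card_mul_index]
    simp [Cube]
  have hle : Nat.card n.range ≤ Nat.card n.ker := by
    refine Nat.card_le_card_of_injective
      (fun r : n.range => (⟨r.1, by obtain ⟨w, hw⟩ := r.2; rw [← hw]; exact hnn w⟩ : n.ker)) ?_
    intro a b hab
    exact Subtype.ext (Subtype.mk.inj hab)
  have h2 : 2 ≤ Nat.card n.range := by
    have : Nontrivial n.range := ⟨⟨0, 0, map_zero n⟩, ⟨v, w₀, hv⟩, fun h =>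
      hv0 (congrArg Subtype.val h).symm⟩
    exact Finite.one_lt_card
  have hR : Nat.card n.range = 2 := by
    have : Nat.card n.range ≤ 2 := by
      by_contra h
      nlinarith
    omega
  have hK : Nat.card n.ker = 4 := by
    rw [hR] at hcard
    omega
  have hrange : ∀ w, n w = 0 ∨ n w = v := by
    intro w
    by_contra! h
    have hsub : (({0, v, n w} : Finset Cube) : Set Cube) ⊆ (n.range : Set Cube) := by
      intro u hu
      simp only [Finset.coe_insert, Finset.coe_singleton, Set.mem_insert_iff,
        Set.mem_singleton_iff] at hu
      rcases hu with rfl | rfl | rfl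
      exacts [⟨0, map_zero n⟩, ⟨w₀, hv⟩, ⟨w, rfl⟩]
    have hle := Set.ncard_le_ncard hsub (Set.toFinite _)
    rw [Set.ncard_coe_finset, Finset.card_eq_three.2 ⟨0, v, n w, hv0.symm, h.1.symm, h.2.symm, rfl⟩,
      ← Nat.card_coe_set_eq] at hle
    have : Nat.card n.range = Nat.card (n.range : Set Cube) := rfl
    omega
  have hker : ∀ k, n k = 0 → k ≠ 0 → k ≠ v → ∀ u, n u = 0 → u = 0 ∨ u = v ∨ u = k ∨ u = k + v := by
    intro k hk hk0 hkv u hu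
    by_contra! h
    have hsub : (({0, v, k, k + v, u} : Finset Cube) : Set Cube) ⊆ (n.ker : Set Cube) := by
      intro t ht
      simp only [Finset.coe_insert, Finset.coe_singleton, Set.mem_insert_iff,
        Set.mem_singleton_iff] at ht
      change n t = 0
      rcases ht with rfl | rfl | rfl | rfl | rfl
      exacts [map_zero n, hnv, hk, by rw [map_add, hk, hnv, add_zero], hu]
    have hle := Set.ncard_le_ncard hsub (Set.toFinite _)
    have h5 : ({0, v, k, k + v, u} : Finset Cube).card = 5 := by
      have h1 : k + v ≠ 0 := fun h => hkv (hzero _ _ h)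
      have h2 : v ≠ k + v := fun h => hk0 (by simpa using h.symm)
      have h3 : k ≠ k + v := fun h => hv0 (by simpa using h.symm)
      rw [Finset.card_insert_of_notMem, Finset.card_insert_of_notMem,
        Finset.card_insert_of_notMem, Finset.card_pair h.2.2.2.symm]
      · simpa using ⟨hv0, h.2.2.1.symm⟩
      · simpa using ⟨hkv.symm, hk0, h.2.1.symm⟩
      · simpa using ⟨hv0.symm, hk0.symm, h1.symm, h.1.symm⟩
    rw [Set.ncard_coe_finset, h5, ← Nat.card_coe_set_eq] at hle
    have : Nat.card n.ker = Nat.card (n.ker : Set Cube) := rfl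
    omega
  have hnx : ∀ w, n (x w) = x (n w) := fun w => by rw [hn, hn, map_add, hcx]
  have hx0 : ∀ w, x w = 0 → w = 0 := fun w hw => hx (hw.trans (map_zero x).symm)
  have hxv : x v = v := by
    rcases hrange (x w₀) with h | h
    · rw [hnx, hv] at h
      exact absurd (hx0 v h) hv0
    · rwa [hnx, hv] at h
  have hyv : y v = 0 := by rw [hy, hxv, hchar]
  have hyK : ∀ k, n k = 0 → y (y k) = 0 := by
    intro k hk
    by_cases hk0 : k = 0
    · rw [hk0, map_zero, map_zero]
    by_cases hkv : k = v
    · rw [hkv, hyv, map_zero]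
    rcases hker k hk hk0 hkv (x k) (by rw [hnx, hk, map_zero]) with h | h | h | h
    · exact absurd (hx0 k h) hk0
    · exact absurd (hx (h.trans hxv.symm)) hkv
    · rw [hy k, h, hchar, map_zero]
    · rw [hy k, h, add_right_comm, hchar, zero_add, hyv]
  have hny : ∀ w, n (y w) = 0 := by
    intro w
    rw [hy, map_add, hnx]
    rcases hrange w with h | h
    · rw [h, map_zero, add_zero]
    · rw [h, hxv, hchar]
  have hyy : ∀ w, y (y w) = x (x w) + w := by
    intro w
    rw [hy (y w), hy w, map_add, add_assoc, ← add_assoc (x w), hchar, zero_add]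
  have hcoset : ∀ w, n w ≠ 0 → y (y w) = y (y w₀) := by
    intro w hw
    have hwv := (hrange w).resolve_left hw
    have := hyK (w + w₀) (by rw [map_add, hwv, hv, hchar])
    rw [map_add, map_add] at this
    exact hzero _ _ this
  have hyy₀ : y (y w₀) = 0 ∨ y (y w₀) = v := by
    by_cases h0 : y w₀ = 0
    · left; rw [h0, map_zero]
    by_cases h1 : y w₀ = v
    · left; rw [h1, hyv]
    have hk := hny w₀
    rcases hker _ hk h0 h1 (x (y w₀)) (by rw [hnx, hk, map_zero]) with h | h | h | h
    · exact absurd (hx0 _ h) h0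
    · exact absurd (hx (h.trans hxv.symm)) h1
    · left; rw [hy (y w₀), h, hchar]
    · right; rw [hy (y w₀), h, add_right_comm, hchar, zero_add]
  rcases hyy₀ with h | h
  · left
    intro w
    refine hzero _ _ ?_
    rw [← hyy]
    by_cases hw : n w = 0
    · exact hyK w hw
    · rw [hcoset w hw, h]
  · right
    intro w
    have : y (y w) = n w := by
      by_cases hw : n w = 0
      · rw [hyK w hw, hw]
      · rw [hcoset w hw, h, (hrange w).resolve_left hw]
    rw [hyy, hn] at this
    exact add_right_cancel this

/-- A string of independent involutions: nonadjacent members commute and no member lies in the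
group generated by the others. -/
structure IsIndepString {Ω : Type*} {k : ℕ} (α : Fin k → Equiv.Perm Ω) : Prop where
  sq_eq_one : ∀ i, α i ^ 2 = 1
  commute : ∀ i j : Fin k, (i : ℕ) + 1 < j → Commute (α i) (α j)
  notMem : ∀ i, α i ∉ Subgroup.closure (α '' {i}ᶜ)

namespace IsIndepString

variable {Ω : Type*} {k : ℕ} {α : Fin k → Equiv.Perm Ω}

theorem rev (hα : IsIndepString α) : IsIndepString (α ∘ Fin.rev) where
  sq_eq_one i := hα.sq_eq_one _
  commute i j hij := (hα.commute j.rev i.rev (by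
    rw [Fin.val_rev, Fin.val_rev]
    omega)).symm
  notMem i := by
    have : (α ∘ Fin.rev) '' {i}ᶜ = α '' {i.rev}ᶜ := by
      rw [Set.image_comp, Set.image_compl_eq Fin.rev_bijective, Set.image_singleton]
    rw [this]
    exact hα.notMem _

theorem ne_one (hα : IsIndepString α) (i : Fin k) : α i ≠ 1 := fun h =>
  hα.notMem i (h ▸ Subgroup.one_mem _)

theorem inv_eq (hα : IsIndepString α) (i : Fin k) : (α i)⁻¹ = α i :=
  inv_eq_of_mul_eq_one_right (by rw [← pow_two, hα.sq_eq_one])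

theorem mem_closure_of_ne (α : Fin k → Equiv.Perm Ω) {i j : Fin k} (hij : j ≠ i) :
    α j ∈ Subgroup.closure (α '' {i}ᶜ) :=
  Subgroup.subset_closure ⟨j, hij, rfl⟩

theorem range_comp_rev (α : Fin k → Equiv.Perm Ω) : Set.range (α ∘ Fin.rev) = Set.range α :=
  Fin.rev_surjective.range_comp α

theorem not_commute_head (hα : IsIndepString α) [Fintype Ω] (hΩ : 3 ≤ Fintype.card Ω)
    (hH : MulAction.IsPreprimitive (Subgroup.closure (Set.range α)) Ω) (hk : 1 < k) :
    ¬ Commute (α ⟨0, by omega⟩) (α ⟨1, hk⟩) := by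
  classical
  intro hcomm
  obtain ⟨h, hh, hnc⟩ := not_commute_of_isPreprimitive hΩ hH (hα.sq_eq_one ⟨0, by omega⟩)
    (hα.ne_one _)
  refine hnc ?_
  have hle : Subgroup.closure (Set.range α) ≤ Subgroup.centralizer {α ⟨0, by omega⟩} := by
    rw [Subgroup.closure_le]
    rintro _ ⟨⟨j, hj⟩, rfl⟩
    rw [SetLike.mem_coe, Subgroup.mem_centralizer_singleton_iff]
    change Commute _ _
    rcases Nat.lt_or_ge 1 j with h1 | h1
    · exact (hα.commute _ _ (by simpa using h1)).symm
    · interval_cases j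
      · exact Commute.refl _
      · exact hcomm.symm
  have := hle hh
  rw [Subgroup.mem_centralizer_singleton_iff] at this
  exact Eq.symm this

theorem not_commute_tail (hα : IsIndepString α) [Fintype Ω] (hΩ : 3 ≤ Fintype.card Ω)
    (hH : MulAction.IsPreprimitive (Subgroup.closure (Set.range α)) Ω) (hk : 1 < k) :
    ¬ Commute (α ⟨k - 2, by omega⟩) (α ⟨k - 1, by omega⟩) := by
  have := hα.rev.not_commute_head hΩ (by rwa [range_comp_rev]) hk
  intro h
  apply this
  have h0 : Fin.rev (⟨0, by omega⟩ : Fin k) = ⟨k - 1, by omega⟩ := by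
    ext; simp [Fin.val_rev]
  have h1 : Fin.rev (⟨1, hk⟩ : Fin k) = ⟨k - 2, by omega⟩ := by
    ext; simp [Fin.val_rev]
  change Commute (α (Fin.rev _)) (α (Fin.rev _))
  rw [h0, h1]
  exact h.symm

theorem mul_sq_ne_one (hα : IsIndepString α) {i j : Fin k} (hij : ¬ Commute (α i) (α j)) :
    (α i * α j) ^ 2 ≠ 1 := by
  intro h
  apply hij
  have h1 : (α i * α j)⁻¹ = α i * α j := inv_eq_of_mul_eq_one_right (by rw [← pow_two, h])
  rw [mul_inv_rev, hα.inv_eq, hα.inv_eq] at h1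
  exact h1.symm

end IsIndepString

theorem Cube.add_eq_add_comm {a b c d : Cube} (h : a + b = c + d) : a + c = b + d := by
  have hchar : ∀ v w : Cube, v + w + w = v := by decide
  rw [← hchar a b, h, ← hchar (b + d) c]
  abel

/-- An affine action of a permutation group on an injectively labelled set: `M h` is the linear
part of `h`. -/
structure IsAffineAction {Ω : Type*} (H : Subgroup (Equiv.Perm Ω)) (l : Ω → Cube)
    (M : Equiv.Perm Ω → Cube →+ Cube) : Prop where
  injective : Function.Injective l
  exists_add : ∀ w, ∃ p q, w = l p + l q
  map_add : ∀ h ∈ H, ∀ p q, M h (l p + l q) = l (h p) + l (h q)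

namespace IsAffineAction

variable {Ω : Type*} {H : Subgroup (Equiv.Perm Ω)} {l : Ω → Cube}
  {M : Equiv.Perm Ω → Cube →+ Cube}

theorem mul (hM : IsAffineAction H l M) {g h : Equiv.Perm Ω} (hg : g ∈ H) (hh : h ∈ H) (w : Cube) :
    M (g * h) w = M g (M h w) := by
  obtain ⟨p, q, rfl⟩ := hM.exists_add w
  rw [hM.map_add _ (H.mul_mem hg hh), hM.map_add _ hh, hM.map_add _ hg]
  rfl

theorem one (hM : IsAffineAction H l M) (w : Cube) : M 1 w = w := by
  obtain ⟨p, q, rfl⟩ := hM.exists_add w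
  rw [hM.map_add _ H.one_mem]
  rfl

theorem map_injective (hM : IsAffineAction H l M) {h : Equiv.Perm Ω} (hh : h ∈ H) :
    Function.Injective (M h) := by
  refine Function.LeftInverse.injective (g := M h⁻¹) fun w => ?_
  rw [← hM.mul (H.inv_mem hh) hh, inv_mul_cancel, hM.one]

theorem apply_apply (hM : IsAffineAction H l M) {h : Equiv.Perm Ω} (hh : h ∈ H) (h2 : h ^ 2 = 1)
    (w : Cube) : M h (M h w) = w := by
  rw [← hM.mul hh hh, ← pow_two, h2, hM.one]

/-- Elements with trivial linear part act as translations. -/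
theorem label_apply (hM : IsAffineAction H l M) {h : Equiv.Perm Ω} (hh : h ∈ H)
    (h1 : ∀ w, M h w = w) (p q : Ω) : l (h p) + l p = l (h q) + l q := by
  have := hM.map_add h hh p q
  rw [h1] at this
  exact Cube.add_eq_add_comm this.symm

theorem eq_of_apply_eq (hM : IsAffineAction H l M) {g h : Equiv.Perm Ω} (hg : g ∈ H) (hh : h ∈ H)
    (hg1 : ∀ w, M g w = w) (hh1 : ∀ w, M h w = w) {p : Ω} (hp : g p = h p) : g = h := by
  ext q
  apply hM.injective
  have h1 := hM.label_apply hg hg1 p q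
  have h2 := hM.label_apply hh hh1 p q
  rw [hp, h2] at h1
  exact (add_right_cancel h1).symm

theorem commute_of_translation (hM : IsAffineAction H l M) {g h : Equiv.Perm Ω} (hg : g ∈ H)
    (hh : h ∈ H) (hg1 : ∀ w, M g w = w) (hh1 : ∀ w, M h w = w) (p : Ω) : g (h p) = h (g p) := by
  apply hM.injective
  have h1 := hM.label_apply hg hg1 p (h p)
  have h2 := hM.label_apply hh hh1 p (g p)
  have hchar : ∀ v w : Cube, v + w + w = v := by decide
  rw [← hchar (l (g (h p))) (l (h p)), ← h1, ← hchar (l (h (g p))) (l (g p)), ← h2]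
  abel

theorem sq_dichotomy (hM : IsAffineAction H l M) {c x : Equiv.Perm Ω} (hc : c ∈ H) (hx : x ∈ H)
    (hc2 : c ^ 2 = 1) (hcx : Commute c x) (hc1 : ∃ w, M c w ≠ w) :
    (∀ w, M (x ^ 2) w = w) ∨ ∀ w, M (x ^ 2) w = M c w := by
  have := sq_eq_self_or_eq_of_comm (c := M c) (x := M x) (hM.apply_apply hc hc2) hc1
    (hM.map_injective hx) (fun w => by rw [← hM.mul hc hx, ← hM.mul hx hc, hcx.eq])
  simpa only [← hM.mul hx hx, ← pow_two] using this

/-- If the linear part of an involution is centralized by the whole primitive group, then the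
group generated by the remaining generators contains no nontrivial translation. -/
theorem eq_one_of_translation (hM : IsAffineAction H l M) (hH : MulAction.IsPreprimitive H Ω)
    [Nonempty Ω] {a : Equiv.Perm Ω} {K : Subgroup (Equiv.Perm Ω)} (hK : K ≤ H) (haH : a ∈ H)
    (hgen : H ≤ Subgroup.closure (insert a K)) (haK : a ∉ K) (ha2 : a ^ 2 = 1)
    (hcomm : ∀ h ∈ H, ∀ w, M a (M h w) = M h (M a w)) :
    ∀ n ∈ K, (∀ w, M n w = w) → n = 1 := by
  have hchar : ∀ w : Cube, w + w = 0 := by decide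
  have hzero : ∀ a b : Cube, a + b = 0 ↔ a = b := by decide
  have haM : ∀ w, M a w = w := by
    have hS : Equivalence fun p q => l (a p) + l p = l (a q) + l q :=
      ⟨fun _ => rfl, fun h => h.symm, fun h h' => h.trans h'⟩
    have hSM : ∀ p q, l (a p) + l p = l (a q) + l q ↔ M a (l p + l q) = l p + l q := by
      intro p q
      rw [hM.map_add a haH]
      exact ⟨Cube.add_eq_add_comm, Cube.add_eq_add_comm⟩
    rcases invariant_rel_trivial_or_total hH hS (fun h hh p q hpq => by
      rw [hSM] at hpq ⊢
      rw [← hM.map_add h hh, hcomm h hh, hpq]) with h | h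
    · exfalso
      obtain ⟨w, hw0, hw⟩ : ∃ w, w ≠ 0 ∧ M a w = w := by
        by_cases h1 : ∃ w, M a w ≠ w
        · obtain ⟨w, hw⟩ := h1
          refine ⟨M a w + w, fun h' => hw ((hzero _ _).1 h'), ?_⟩
          rw [_root_.map_add, hM.apply_apply haH ha2, add_comm]
        · push Not at h1
          exact ⟨(1, 0, 0), by decide, h1 _⟩
      obtain ⟨p, q, rfl⟩ := hM.exists_add w
      have := h p q ((hSM p q).2 hw)
      rw [this, hchar] at hw0
      exact hw0 rfl
    · intro w
      obtain ⟨p, q, rfl⟩ := hM.exists_add w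
      exact (hSM p q).1 (h p q)
  have hS : Equivalence fun p q : Ω => ∃ n ∈ K, (∀ w, M n w = w) ∧ n p = q := by
    refine ⟨fun p => ⟨1, K.one_mem, hM.one, rfl⟩, ?_, ?_⟩
    · rintro p q ⟨n, hn, hn1, rfl⟩
      refine ⟨n⁻¹, K.inv_mem hn, fun w => ?_, by simp⟩
      apply hM.map_injective (hK hn)
      rw [← hM.mul (hK hn) (hK (K.inv_mem hn)), mul_inv_cancel, hM.one, hn1]
    · rintro p q s ⟨n, hn, hn1, rfl⟩ ⟨n', hn', hn1', rfl⟩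
      exact ⟨n' * n, K.mul_mem hn' hn, fun w => by rw [hM.mul (hK hn') (hK hn), hn1, hn1'], rfl⟩
  have hinv : ∀ h ∈ H, ∀ p q, (∃ n ∈ K, (∀ w, M n w = w) ∧ n p = q) →
      ∃ n ∈ K, (∀ w, M n w = w) ∧ n (h p) = h q := by
    intro h hh
    have hh' := hgen hh
    clear hh
    have hgenerator : ∀ x ∈ insert a (K : Set (Equiv.Perm Ω)), ∀ n ∈ K, (∀ w, M n w = w) →
        ∀ p, ∃ n' ∈ K, (∀ w, M n' w = w) ∧ n' (x p) = x (n p) := by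
      rintro x (rfl | hx) n hn hn1 p
      · exact ⟨n, hn, hn1, hM.commute_of_translation (hK hn) haH hn1 haM p⟩
      · refine ⟨x * n * x⁻¹, K.mul_mem (K.mul_mem hx hn) (K.inv_mem hx), fun w => ?_, by simp⟩
        have hxH := hK hx
        have hnH := hK hn
        rw [hM.mul (H.mul_mem hxH hnH) (H.inv_mem hxH), hM.mul hxH hnH, hn1,
          ← hM.mul hxH (H.inv_mem hxH), mul_inv_cancel, hM.one]
    have hainv : a⁻¹ = a := inv_eq_of_mul_eq_one_right (by rw [← pow_two, ha2])
    induction hh' using Subgroup.closure_induction'' with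
    | mem x hx =>
      rintro p q ⟨n, hn, hn1, rfl⟩
      exact hgenerator x hx n hn hn1 p
    | inv_mem x hx =>
      rintro p q ⟨n, hn, hn1, rfl⟩
      refine hgenerator x⁻¹ ?_ n hn hn1 p
      rcases hx with rfl | hx
      · exact Or.inl hainv
      · exact Or.inr (K.inv_mem hx)
    | one => exact fun p q h => h
    | mul x y _ _ ihx ihy => exact fun p q h => ihx _ _ (ihy _ _ h)
  rcases invariant_rel_trivial_or_total hH hS hinv with h | h
  · intro n hn hn1
    ext p
    exact (h p (n p) ⟨n, hn, hn1, rfl⟩).symm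
  · exfalso
    obtain ⟨p⟩ := ‹Nonempty Ω›
    obtain ⟨n, hn, hn1, hnp⟩ := h p (a p)
    exact haK (hM.eq_of_apply_eq (hK hn) haH hn1 haM hnp ▸ hn)

end IsAffineAction

namespace IsIndepString

variable {Ω : Type*} {k : ℕ} {α : Fin k → Equiv.Perm Ω} {l : Ω → Cube}
  {M : Equiv.Perm Ω → Cube →+ Cube}

theorem not_commute_linear_parts (hα : IsIndepString α) [Fintype Ω] (hΩ : 3 ≤ Fintype.card Ω)
    (hH : MulAction.IsPreprimitive (Subgroup.closure (Set.range α)) Ω) (hk : 5 ≤ k)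
    (hM : IsAffineAction (Subgroup.closure (Set.range α)) l M) :
    ¬ ∀ w, M (α ⟨0, by omega⟩) (M (α ⟨1, by omega⟩) w) =
      M (α ⟨1, by omega⟩) (M (α ⟨0, by omega⟩) w) := by
  intro hcomm
  set H := Subgroup.closure (Set.range α) with hHdef
  have hmem : ∀ i, α i ∈ H := fun i => Subgroup.subset_closure ⟨i, rfl⟩
  have : Nonempty Ω := Fintype.card_pos_iff.1 (by omega)
  set i₀ : Fin k := ⟨0, by omega⟩ with hi₀
  set i₁ : Fin k := ⟨1, by omega⟩ with hi₁
  set y := α ⟨k - 2, by omega⟩ with hy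
  set z := α ⟨k - 1, by omega⟩ with hz
  set K := Subgroup.closure (α '' {i₀}ᶜ) with hK
  have hKH : K ≤ H := Subgroup.closure_mono (Set.image_subset_range _ _)
  have hmemK : ∀ j, j ≠ i₀ → α j ∈ K := fun j hj => mem_closure_of_ne α hj
  have hcommH : ∀ h ∈ H, ∀ w, M (α i₀) (M h w) = M h (M (α i₀) w) := by
    have hgens : ∀ j w, M (α i₀) (M (α j) w) = M (α j) (M (α i₀) w) := by
      rintro ⟨j, hj⟩ w
      rcases Nat.lt_or_ge 1 j with h1 | h1
      · rw [← hM.mul (hmem _) (hmem _), ← hM.mul (hmem _) (hmem _),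
          (hα.commute i₀ ⟨j, hj⟩ (by simpa [hi₀] using h1)).eq]
      · interval_cases j
        · rfl
        · exact hcomm w
    intro h hh
    induction hh using Subgroup.closure_induction'' with
    | mem x hx =>
      obtain ⟨j, rfl⟩ := hx
      exact hgens j
    | inv_mem x hx =>
      obtain ⟨j, rfl⟩ := hx
      rw [hα.inv_eq]
      exact hgens j
    | one => exact fun w => by rw [hM.one, hM.one]
    | mul x y hx hy ihx ihy =>
      exact fun w => by rw [hM.mul hx hy, ihx, ihy, hM.mul hx hy]
  have htriv := hM.eq_one_of_translation hH hKH (hmem i₀) (by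
    rw [hHdef, Subgroup.closure_le]
    rintro _ ⟨j, rfl⟩
    by_cases hj : j = i₀
    · exact Subgroup.subset_closure (Or.inl (by rw [hj]))
    · exact Subgroup.subset_closure (Or.inr (hmemK j hj))) (hα.notMem i₀) (hα.sq_eq_one i₀) hcommH
  have hyK : y ∈ K := hmemK _ (by simp [hi₀, Fin.ext_iff]; omega)
  have hzK : z ∈ K := hmemK _ (by simp [hi₀, Fin.ext_iff]; omega)
  have h1K : α i₁ ∈ K := hmemK _ (by simp [hi₀, hi₁, Fin.ext_iff])
  have hxK : y * z ∈ K := K.mul_mem hyK hzK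
  have hx2 : (y * z) ^ 2 ≠ 1 := hα.mul_sq_ne_one (hα.not_commute_tail hΩ hH (by omega))
  have hc : Commute (α i₁) (y * z) :=
    (hα.commute _ _ (by simp [hi₁]; omega)).mul_right (hα.commute _ _ (by simp [hi₁]; omega))
  rcases hM.sq_dichotomy (hmem i₁) (hKH hxK) (hα.sq_eq_one i₁) hc (by
    by_contra! h
    exact hα.ne_one i₁ (htriv _ h1K h)) with h | h
  · exact hx2 (htriv _ (K.pow_mem hxK 2) h)
  · have h1 := htriv ((y * z) ^ 2 * α i₁) (K.mul_mem (K.pow_mem hxK 2) h1K) fun w => by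
      rw [hM.mul (hKH (K.pow_mem hxK 2)) (hmem _), h, hM.apply_apply (hmem _) (hα.sq_eq_one _)]
    have h2 : (y * z) ^ 2 = α i₁ := by
      rw [← hα.inv_eq i₁]
      exact eq_inv_of_mul_eq_one_left h1
    apply hα.notMem i₁
    rw [← h2]
    refine Subgroup.pow_mem _ (Subgroup.mul_mem _ (mem_closure_of_ne α ?_)
      (mem_closure_of_ne α ?_)) 2 <;> simp [hi₁, Fin.ext_iff] <;> omega

theorem false_of_isAffineAction (hα : IsIndepString α) [Fintype Ω] (hΩ : 3 ≤ Fintype.card Ω)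
    (hH : MulAction.IsPreprimitive (Subgroup.closure (Set.range α)) Ω) (hk : 5 ≤ k)
    (hM : IsAffineAction (Subgroup.closure (Set.range α)) l M) : False := by
  have hnot := hα.not_commute_linear_parts hΩ hH hk hM
  have hnot' := hα.rev.not_commute_linear_parts hΩ (by rwa [range_comp_rev]) hk
    (by rwa [range_comp_rev])
  set H := Subgroup.closure (Set.range α) with hHdef
  have hmem : ∀ i, α i ∈ H := fun i => Subgroup.subset_closure ⟨i, rfl⟩
  set x := α ⟨0, by omega⟩ * α ⟨1, by omega⟩ with hx
  have hxH : x ∈ H := H.mul_mem (hmem _) (hmem _)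
  have hx2 : ¬ ∀ w, M (x ^ 2) w = w := by
    intro h
    apply hnot
    intro w
    have h1 := h (M (α ⟨1, by omega⟩) (M (α ⟨0, by omega⟩) w))
    rw [pow_two, hM.mul hxH hxH, hM.mul (hmem _) (hmem _),
      hM.mul (hmem _) (hmem _), hM.apply_apply (hmem _) (hα.sq_eq_one _),
      hM.apply_apply (hmem _) (hα.sq_eq_one _)] at h1
    exact h1
  have hdich : ∀ j : Fin k, 2 < (j : ℕ) → (∀ w, M (α j) w = w) ∨ ∀ w, M (α j) w = M (x ^ 2) w := by
    intro j hj
    by_cases h1 : ∃ w, M (α j) w ≠ w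
    · right
      have hc : Commute (α j) x := (hα.commute _ _ (by simp; omega)).symm.mul_right
        (hα.commute _ _ (by simp; omega)).symm
      intro w
      exact (((hM.sq_dichotomy (hmem j) hxH (hα.sq_eq_one j) hc h1).resolve_left hx2) w).symm
    · left
      push Not at h1
      exact h1
  apply hnot'
  intro w
  change M (α _) (M (α _) w) = M (α _) (M (α _) w)
  rcases hdich (Fin.rev ⟨0, by omega⟩) (by simp [Fin.val_rev]; omega) with h | h <;>
  rcases hdich (Fin.rev ⟨1, by omega⟩) (by simp [Fin.val_rev]; omega) with h' | h' <;>
  simp only [h, h']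

theorem false_of_linear (hα : IsIndepString α) [Fintype Ω] (hΩ : 3 ≤ Fintype.card Ω)
    (hH : MulAction.IsPreprimitive (Subgroup.closure (Set.range α)) Ω) (hk : 4 ≤ k)
    (hM : IsAffineAction (Subgroup.closure (Set.range α)) l M)
    (hlin : ∀ h ∈ Subgroup.closure (Set.range α), ∀ p, M h (l p) = l (h p)) : False := by
  set H := Subgroup.closure (Set.range α) with hHdef
  have hmem : ∀ i, α i ∈ H := fun i => Subgroup.subset_closure ⟨i, rfl⟩
  have hfaith : ∀ g ∈ H, ∀ h ∈ H, (∀ w, M g w = M h w) → g = h := by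
    intro g hg h hh hgh
    ext p
    apply hM.injective
    rw [← hlin g hg, ← hlin h hh, hgh]
  set x := α ⟨0, by omega⟩ * α ⟨1, by omega⟩ with hx
  set c := α ⟨k - 1, by omega⟩ with hc
  have hxH : x ∈ H := H.mul_mem (hmem _) (hmem _)
  have hcx : Commute c x := (hα.commute _ _ (by simp; omega)).symm.mul_right
    (hα.commute _ _ (by simp; omega)).symm
  rcases hM.sq_dichotomy (hmem _) hxH (hα.sq_eq_one _) hcx (by
    by_contra! h
    exact hα.ne_one _ (hfaith _ (hmem _) 1 H.one_mem fun w => by rw [h, hM.one])) with h | h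
  · exact hα.mul_sq_ne_one (hα.not_commute_head hΩ hH (by omega))
      (hfaith _ (H.pow_mem hxH 2) 1 H.one_mem fun w => by rw [h, hM.one])
  · have hxc : x ^ 2 = c := hfaith _ (H.pow_mem hxH 2) _ (hmem _) h
    apply hα.notMem ⟨k - 1, by omega⟩
    rw [← hc, ← hxc]
    refine Subgroup.pow_mem _ (Subgroup.mul_mem _ (mem_closure_of_ne α ?_)
      (mem_closure_of_ne α ?_)) 2 <;> simp [Fin.ext_iff] <;> omega

end IsIndepString

section AdjoinInvolution

variable {G : Type*} [Group G] {E : Subgroup G} {a : G}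

theorem mem_or_mul_mem_of_mem_sup_zpowers (ha : a ^ 2 = 1) (hcomm : ∀ g ∈ E, Commute a g)
    {g : G} (hg : g ∈ E ⊔ Subgroup.zpowers a) : g ∈ E ∨ a * g ∈ E := by
  have haa : a * a = 1 := by rw [← pow_two, ha]
  let E' : Subgroup G :=
    { carrier := {g | g ∈ E ∨ a * g ∈ E}
      one_mem' := Or.inl E.one_mem
      mul_mem' := by
        rintro x y (hx | hx) (hy | hy)
        · exact Or.inl (E.mul_mem hx hy)
        · right
          rw [← mul_assoc, (hcomm x hx).eq, mul_assoc]
          exact E.mul_mem hx hy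
        · right
          rw [← mul_assoc]
          exact E.mul_mem hx hy
        · left
          have := E.mul_mem hx hy
          rwa [← mul_assoc, ← (hcomm _ hx).eq, ← mul_assoc a a x, haa, one_mul] at this
      inv_mem' := by
        rintro x (hx | hx)
        · exact Or.inl (E.inv_mem hx)
        · right
          have h1 := (hcomm _ hx).eq
          have h2 := E.inv_mem hx
          rw [mul_inv_rev, inv_eq_of_mul_eq_one_right haa] at h2
          rw [← mul_assoc, haa, one_mul] at h1
          have h3 : a * x⁻¹ = x⁻¹ * a := by
            rw [mul_inv_eq_iff_eq_mul, mul_assoc, eq_inv_mul_iff_mul_eq]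
            conv_lhs => rw [h1]
            rw [mul_assoc, mul_assoc, haa, mul_one]
          rwa [h3] }
  have hle : E ⊔ Subgroup.zpowers a ≤ E' := by
    rw [sup_le_iff, Subgroup.zpowers_le]
    exact ⟨fun x hx => Or.inl hx, Or.inr (haa ▸ E.one_mem)⟩
  exact hle hg

theorem sq_eq_one_of_mem_sup_zpowers (hE : ∀ g ∈ E, g ^ 2 = 1) (ha : a ^ 2 = 1)
    (hcomm : ∀ g ∈ E, Commute a g) : ∀ g ∈ E ⊔ Subgroup.zpowers a, g ^ 2 = 1 := by
  intro g hg
  rcases mem_or_mul_mem_of_mem_sup_zpowers ha hcomm hg with h | h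
  · exact hE g h
  · have h1 := hE _ h
    have hag : Commute a g := by
      have := (Commute.refl a).inv_right.mul_right (hcomm _ h)
      rwa [inv_mul_cancel_left] at this
    rwa [hag.mul_pow, ha, one_mul] at h1

theorem card_sup_zpowers (ha : a ^ 2 = 1) (hcomm : ∀ g ∈ E, Commute a g) (haE : a ∉ E) :
    Nat.card (E ⊔ Subgroup.zpowers a : Subgroup G) = 2 * Nat.card E := by
  have hle : E ≤ E ⊔ Subgroup.zpowers a := le_sup_left
  have hamem : a ∈ E ⊔ Subgroup.zpowers a := Subgroup.mem_sup_right (Subgroup.mem_zpowers a)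
  have h2 : E.relIndex (E ⊔ Subgroup.zpowers a) = 2 := by
    rw [Subgroup.relIndex, Subgroup.index_eq_two_iff']
    refine ⟨⟨a, hamem⟩, fun ⟨g, hg⟩ => ?_⟩
    simp only [Subgroup.mem_subgroupOf, Subgroup.coe_mul]
    by_cases h : g ∈ E
    · exact Or.inr ⟨h, fun h' => haE ((E.mul_mem_cancel_right h).1 h')⟩
    · exact Or.inl ⟨(mem_or_mul_mem_of_mem_sup_zpowers ha hcomm hg).resolve_left h, h⟩
  rw [← h2, mul_comm, ← Subgroup.card_mul_index (E.subgroupOf (E ⊔ Subgroup.zpowers a)),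
    Nat.card_congr (Subgroup.subgroupOfEquivOfLe hle).toEquiv]
  rfl

end AdjoinInvolution

namespace IsIndepString

variable {Ω : Type*} {k : ℕ} {α : Fin k → Equiv.Perm Ω}

/-- Pairwise commuting members of an independent string generate an elementary abelian group of
the maximal possible order. -/
theorem card_closure_image (hα : IsIndepString α) (s : Finset (Fin k))
    (hs : ∀ i ∈ s, ∀ j ∈ s, Commute (α i) (α j)) :
    (∀ g ∈ Subgroup.closure (α '' s), g ^ 2 = 1) ∧
      Nat.card (Subgroup.closure (α '' s)) = 2 ^ s.card := by
  induction s using Finset.induction_on with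
  | empty => simp
  | insert i s his ih =>
    obtain ⟨ih1, ih2⟩ := ih fun i hi j hj =>
      hs i (Finset.mem_insert_of_mem hi) j (Finset.mem_insert_of_mem hj)
    have heq : Subgroup.closure (α '' (insert i s : Finset (Fin k))) =
        Subgroup.closure (α '' s) ⊔ Subgroup.zpowers (α i) := by
      rw [Finset.coe_insert, Set.image_insert_eq, Set.insert_eq, Subgroup.closure_union,
        ← Subgroup.zpowers_eq_closure, sup_comm]
    have hcomm : ∀ g ∈ Subgroup.closure (α '' s), Commute (α i) g := by
      have hle : Subgroup.closure (α '' s) ≤ Subgroup.centralizer {α i} := by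
        rw [Subgroup.closure_le]
        rintro _ ⟨j, hj, rfl⟩
        rw [SetLike.mem_coe, Subgroup.mem_centralizer_singleton_iff]
        exact hs j (Finset.mem_insert_of_mem hj) i (Finset.mem_insert_self _ _)
      intro g hg
      have := hle hg
      rw [Subgroup.mem_centralizer_singleton_iff] at this
      exact this.symm
    have hnot : α i ∉ Subgroup.closure (α '' s) := fun h => hα.notMem i
      (Subgroup.closure_mono (Set.image_mono fun j hj => by
        rintro rfl
        exact his hj) h)
    rw [heq]
    refine ⟨sq_eq_one_of_mem_sup_zpowers ih1 (hα.sq_eq_one i) hcomm, ?_⟩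
    rw [card_sup_zpowers (hα.sq_eq_one i) hcomm hnot, ih2, Finset.card_insert_of_notMem his,
      pow_succ, mul_comm]

end IsIndepString

theorem flip_comp_involution_iterate_four (τ : Equiv.Perm (Bool × Bool)) (hτ : τ * τ = 1)
    (v : Bool × Bool) : (fun w => (!(τ w).1, (τ w).2))^[4] v = v := by
  revert τ v
  decide

/-- If `a`, `b`, `c` generate a regular elementary abelian group of order eight and `t` is an
involution commuting with `c`, then `a * t` permutes the four orbits of `c` with order dividing
four. -/
theorem mul_pow_eight_eq_one {Ω : Type*} [Fintype Ω] {a b c t : Equiv.Perm Ω}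
    (hΩ : Fintype.card Ω = 8) (ha : a ^ 2 = 1) (hc : c ^ 2 = 1)
    (ht : t ^ 2 = 1) (hac : Commute a c) (hbc : Commute b c) (htc : Commute t c)
    (htr : ∀ p q, ∃ i j l : Bool, (a ^ i.toNat * b ^ j.toNat * c ^ l.toNat) p = q) :
    (a * t) ^ 8 = 1 := by
  ext p
  let F : Bool × Bool × Bool → Ω := fun v =>
    (a ^ v.1.toNat * b ^ v.2.1.toNat * c ^ v.2.2.toNat) p
  have hF : Function.Bijective F := by
    rw [Fintype.bijective_iff_surjective_and_card]
    refine ⟨fun q => ?_, by rw [hΩ]; rfl⟩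
    obtain ⟨i, j, l, h⟩ := htr p q
    exact ⟨(i, j, l), h⟩
  let e := Equiv.ofBijective F hF
  have heF : ∀ v, e.symm (F v) = v := e.symm_apply_apply
  have haF : ∀ i j l, a (F (i, j, l)) = F (!i, j, l) := by
    rintro (_ | _) j l
    · simp [F]
    · simp [F, apply_apply_of_sq_eq_one ha]
  have hcc : ∀ q, c (c q) = q := apply_apply_of_sq_eq_one hc
  have hcF : ∀ i j l, c (F (i, j, l)) = F (i, j, !l) := by
    intro i j l
    have h1 : c * (a ^ i.toNat * b ^ j.toNat) = a ^ i.toNat * b ^ j.toNat * c :=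
      ((hac.pow_left _).mul_left (hbc.pow_left _)).symm.eq
    have h2 : c * (a ^ i.toNat * b ^ j.toNat * c ^ l.toNat) =
        a ^ i.toNat * b ^ j.toNat * c ^ (!l).toNat := by
      rw [← mul_assoc, h1, mul_assoc]
      congr 1
      cases l
      · simp
      · simp [← pow_two, hc]
    exact congrArg (fun f : Equiv.Perm Ω => f p) h2
  let g : Ω → Bool × Bool := fun q => ((e.symm q).1, (e.symm q).2.1)
  have hgF : ∀ i j l, g (F (i, j, l)) = (i, j) := fun i j l => by simp only [g, heF]
  have hsurj : ∀ q, ∃ i j l, F (i, j, l) = q := fun q => by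
    obtain ⟨⟨i, j, l⟩, h⟩ := hF.2 q
    exact ⟨i, j, l, h⟩
  have hga : ∀ q, g (a q) = (!(g q).1, (g q).2) := by
    intro q
    obtain ⟨i, j, l, rfl⟩ := hsurj q
    rw [haF, hgF, hgF]
  have hgc : ∀ q, g (c q) = g q := by
    intro q
    obtain ⟨i, j, l, rfl⟩ := hsurj q
    rw [hcF, hgF, hgF]
  have hgeq : ∀ q q', g q = g q' → q = q' ∨ q = c q' := by
    intro q q' h
    obtain ⟨i, j, l, rfl⟩ := hsurj q
    obtain ⟨i', j', l', rfl⟩ := hsurj q'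
    rw [hgF, hgF, Prod.mk.injEq] at h
    obtain ⟨rfl, rfl⟩ := h
    rw [hcF]
    cases l <;> cases l' <;> simp
  let f : Bool × Bool → Bool × Bool := fun v => g (t (F (v.1, v.2, false)))
  have hgt : ∀ q, g (t q) = f (g q) := by
    intro q
    obtain ⟨i, j, l, rfl⟩ := hsurj q
    rw [hgF]
    cases l
    · rfl
    · have h1 : F (i, j, true) = c (F (i, j, false)) := by rw [hcF]; rfl
      have h2 := congrArg (fun f : Equiv.Perm Ω => f (F (i, j, false))) htc.eq
      simp only [coe_mul, Function.comp] at h2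
      rw [h1, h2, hgc]
  have hff : ∀ v, f (f v) = v := by
    intro v
    rw [← hgt, apply_apply_of_sq_eq_one ht, hgF]
  let τ : Equiv.Perm (Bool × Bool) := ⟨f, f, hff, hff⟩
  have hττ : τ * τ = 1 := by
    ext1 v
    exact hff v
  have hgat : Function.Semiconj g (a * t : Equiv.Perm Ω) fun w => (!(τ w).1, (τ w).2) := by
    intro q
    rw [coe_mul, Function.comp, hga, hgt]
    rfl
  have hfour : ∀ q, g (((a * t) ^ 4) q) = g q := by
    intro q
    rw [← iterate_eq_pow, Function.Semiconj.iterate_right hgat 4 q]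
    exact flip_comp_involution_iterate_four τ hττ _
  have hcx : Commute c ((a * t) ^ 4) := ((hac.symm).mul_right htc.symm).pow_right 4
  have h8 : ((a * t) ^ 8) p = ((a * t) ^ 4) (((a * t) ^ 4) p) := by
    rw [← mul_apply, ← pow_add]
  rw [h8]
  rcases hgeq _ _ (hfour p) with h | h
  · rw [h, h]
    rfl
  · have h2 := congrArg (fun f : Equiv.Perm Ω => f p) hcx.eq
    simp only [coe_mul, Function.comp] at h2
    rw [h, ← h2, h, hcc]
    rfl

/-- An elementary abelian group of order eight on eight points without nontrivial elements of
degree at most four is regular. -/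
theorem regular_of_card_eq_eight {Ω : Type*} [Fintype Ω] [DecidableEq Ω]
    {E : Subgroup (Equiv.Perm Ω)} (hΩ : Fintype.card Ω = 8) (hE : ∀ g ∈ E, g ^ 2 = 1)
    (hcard : Nat.card E = 2 ^ 3) (hlarge : ∀ g ∈ E, g.support.card ≤ 4 → g = 1) :
    (∀ p q, ∃ g ∈ E, g p = q) ∧ ∀ g ∈ E, ∀ p, g p = p → g = 1 := by
  rcases exists_card_support_le_four_or_regular hE hcard (by omega) (by omega) with
    ⟨g, hg, hg1, h4⟩ | ⟨-, p, hp, hfree⟩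
  · exact absurd (hlarge g hg h4) hg1
  have huniv : ∀ q, q ∈ orbitFinset E p := fun q => by
    rw [(Finset.card_eq_iff_eq_univ _).1 (hp.trans hΩ.symm)]
    exact Finset.mem_univ q
  refine ⟨fun q q' => ?_, fun g hg q hq => hfree g hg q (huniv q) hq⟩
  obtain ⟨g, hg, rfl⟩ := mem_orbitFinset.1 (huniv q)
  obtain ⟨g', hg', rfl⟩ := mem_orbitFinset.1 (huniv q')
  exact ⟨g' * g⁻¹, E.mul_mem hg' (E.inv_mem hg), by simp⟩

theorem exists_eq_pow_mul_of_mem_sup_zpowers {G : Type*} [Group G] {E : Subgroup G} {a g : G}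
    (ha : a ^ 2 = 1) (hcomm : ∀ g ∈ E, Commute a g) (hg : g ∈ E ⊔ Subgroup.zpowers a) :
    ∃ i : Bool, ∃ h ∈ E, g = a ^ i.toNat * h := by
  rcases mem_or_mul_mem_of_mem_sup_zpowers ha hcomm hg with h | h
  · exact ⟨false, g, h, by simp⟩
  · exact ⟨true, a * g, h, by rw [Bool.toNat_true, pow_one, ← mul_assoc, ← pow_two, ha, one_mul]⟩

theorem exists_eq_pow_mul_pow_mul_pow {G : Type*} [Group G] {a b c g : G} (ha : a ^ 2 = 1)
    (hb : b ^ 2 = 1) (hc : c ^ 2 = 1) (hab : Commute a b) (hac : Commute a c) (hbc : Commute b c)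
    (hg : g ∈ Subgroup.closure {a, b, c}) :
    ∃ i j l : Bool, g = a ^ i.toNat * b ^ j.toNat * c ^ l.toNat := by
  have heq : Subgroup.closure {a, b, c} =
      ((⊥ ⊔ Subgroup.zpowers c) ⊔ Subgroup.zpowers b) ⊔ Subgroup.zpowers a := by
    rw [Set.insert_eq, Set.insert_eq, Subgroup.closure_union, Subgroup.closure_union,
      Subgroup.zpowers_eq_closure, Subgroup.zpowers_eq_closure, Subgroup.zpowers_eq_closure,
      bot_sup_eq, sup_comm, sup_comm (Subgroup.closure {b})]
  have hcent : ∀ {x y : G}, Commute x y → Subgroup.zpowers y ≤ Subgroup.centralizer {x} :=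
    fun h => by
      rw [Subgroup.zpowers_le, Subgroup.mem_centralizer_singleton_iff]
      exact h.symm.eq
  have hcomm : ∀ {x : G} {S : Subgroup G}, S ≤ Subgroup.centralizer {x} → ∀ g ∈ S, Commute x g :=
    fun hS g hg => (Subgroup.mem_centralizer_singleton_iff.1 (hS hg)).symm
  rw [heq] at hg
  have hca := hcomm (sup_le (sup_le bot_le (hcent hac)) (hcent hab))
  have hcb := hcomm (sup_le bot_le (hcent hbc))
  have hcc := hcomm (x := c) (S := ⊥) bot_le
  obtain ⟨i, g₁, hg₁, rfl⟩ := exists_eq_pow_mul_of_mem_sup_zpowers ha hca hg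
  obtain ⟨j, g₂, hg₂, rfl⟩ := exists_eq_pow_mul_of_mem_sup_zpowers hb hcb hg₁
  obtain ⟨l, g₃, hg₃, rfl⟩ := exists_eq_pow_mul_of_mem_sup_zpowers hc hcc hg₂
  refine ⟨i, j, l, ?_⟩
  rw [Subgroup.mem_bot.1 hg₃, mul_one, mul_assoc]

/-- On eight points, the direct product of a dihedral group of order eight with a group of order
two contains a nontrivial involution of degree at most four. -/
theorem false_of_dihedral {Ω : Type*} [Fintype Ω] [DecidableEq Ω] {H : Subgroup (Equiv.Perm Ω)}
    (hΩ : Fintype.card Ω = 8) (hlarge : ∀ g ∈ H, g ^ 2 = 1 → g.support.card ≤ 4 → g = 1)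
    {β x c : Equiv.Perm Ω} (hβH : β ∈ H) (hxH : x ∈ H) (hcH : c ∈ H) (hβ : β ^ 2 = 1)
    (hc : c ^ 2 = 1) (hβx : β * x * β = x⁻¹) (hx4 : x ^ 4 = 1) (hx2 : x ^ 2 ≠ 1)
    (hcβ : Commute c β) (hcx : Commute c x) (hc1 : c ≠ 1) (hcu : c ≠ x ^ 2) : False := by
  have hββ : β * β = 1 := by rw [← pow_two, hβ]
  set u := x ^ 2 with hu
  have hu2 : u ^ 2 = 1 := by rw [hu, ← pow_mul, hx4]
  have hxu : Commute x u := (Commute.refl x).pow_right 2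
  have hcu' : Commute c u := hcx.pow_right 2
  have hxinv : x⁻¹ = x * u := by
    rw [inv_eq_iff_mul_eq_one, hu, ← pow_succ', ← pow_succ', hx4]
  have hβx' : β * x = x * u * β := by
    rw [← hxinv, ← hβx, mul_assoc, hββ, mul_one]
  have hβu : Commute β u := by
    change β * u = u * β
    have : u = x * x := pow_two x
    rw [this, ← mul_assoc, hβx', mul_assoc, hβx', ← mul_assoc, ← mul_assoc, mul_assoc x u x,
      ← hxu.eq, ← mul_assoc, mul_assoc _ u u, ← pow_two u, hu2, mul_one]
  have hnβ : ¬ Commute β x := by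
    intro h
    apply hx2
    have h1 := h.eq
    rw [hβx', mul_assoc, mul_right_inj, ← hβu.eq] at h1
    exact mul_eq_left.1 h1
  have hnγ : ¬ Commute (β * x) x := by
    intro h
    apply hnβ
    have := h.mul_left (Commute.refl x).inv_left
    rwa [mul_inv_cancel_right] at this
  have hγ : (β * x) ^ 2 = 1 := by
    rw [pow_two, ← mul_assoc, hβx, inv_mul_cancel]
  -- the Klein four-group generated by `u` and `c`
  set K₁ := (⊥ : Subgroup (Equiv.Perm Ω)) ⊔ Subgroup.zpowers u with hK₁
  set K := K₁ ⊔ Subgroup.zpowers c with hK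
  have hcomm₀ : ∀ a : Equiv.Perm Ω, ∀ g ∈ (⊥ : Subgroup (Equiv.Perm Ω)), Commute a g := by
    rintro a g hg
    rw [Subgroup.mem_bot.1 hg]
    exact Commute.one_right a
  have hmem₁ : ∀ g ∈ K₁, g = 1 ∨ u * g = 1 := fun g hg => by
    simpa only [Subgroup.mem_bot] using mem_or_mul_mem_of_mem_sup_zpowers hu2 (hcomm₀ u) hg
  have hcommK : ∀ a : Equiv.Perm Ω, Commute a u → Commute a c → ∀ g ∈ K, Commute a g := by
    intro a hau hac g hg
    have hle : K ≤ Subgroup.centralizer {a} := by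
      rw [hK, hK₁, bot_sup_eq, sup_le_iff, Subgroup.zpowers_le, Subgroup.zpowers_le,
        Subgroup.mem_centralizer_singleton_iff, Subgroup.mem_centralizer_singleton_iff]
      exact ⟨hau.symm.eq, hac.symm.eq⟩
    have := hle hg
    rw [Subgroup.mem_centralizer_singleton_iff] at this
    exact this.symm
  have hK₁K : K₁ ≤ K := le_sup_left
  have huK : u ∈ K := hK₁K (Subgroup.mem_sup_right (Subgroup.mem_zpowers u))
  have hcommK₁ : ∀ g ∈ K₁, Commute c g := fun g hg =>
    hcommK c hcu' (Commute.refl c) g (hK₁K hg)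
  have hsqK : ∀ g ∈ K, g ^ 2 = 1 :=
    sq_eq_one_of_mem_sup_zpowers (sq_eq_one_of_mem_sup_zpowers (fun g hg => by
      rw [Subgroup.mem_bot.1 hg, one_pow]) hu2 (hcomm₀ u)) hc hcommK₁
  have hcardK : Nat.card K = 2 ^ 2 := by
    have hc₁ : c ∉ K₁ := fun h => (hmem₁ c h).elim hc1 fun h1 => hcu (by
      rw [eq_inv_of_mul_eq_one_right h1, inv_eq_of_mul_eq_one_right (by rw [← pow_two, hu2])])
    rw [hK, card_sup_zpowers hc hcommK₁ hc₁, hK₁, card_sup_zpowers hu2 (hcomm₀ u)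
      (fun h => hx2 (Subgroup.mem_bot.1 h)), Subgroup.card_bot]
    norm_num
  have hKx : ∀ g ∈ K, Commute x g := hcommK x hxu hcx.symm
  have huH : u ∈ H := H.pow_mem hxH 2
  have hregular : ∀ a ∈ H, a ^ 2 = 1 → Commute a u → Commute a c → ¬ Commute a x →
      (∀ p q, ∃ g ∈ K ⊔ Subgroup.zpowers a, g p = q) ∧
        ∀ g ∈ K ⊔ Subgroup.zpowers a, ∀ p, g p = p → g = 1 := by
    intro a haH ha hau hac hax
    have hsq := sq_eq_one_of_mem_sup_zpowers hsqK ha (hcommK a hau hac)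
    refine regular_of_card_eq_eight hΩ hsq ?_ fun g hg h4 => hlarge g ?_ (hsq g hg) h4
    · rw [card_sup_zpowers ha (hcommK a hau hac) (fun h => hax (hKx a h).symm), hcardK]
      norm_num
    · have hle : K ⊔ Subgroup.zpowers a ≤ H := by
        rw [hK, hK₁, bot_sup_eq, sup_le_iff, sup_le_iff, Subgroup.zpowers_le, Subgroup.zpowers_le,
          Subgroup.zpowers_le]
        exact ⟨⟨huH, hcH⟩, haH⟩
      exact hle hg
  obtain ⟨htr, hfree⟩ := hregular β hβH hβ hβu hcβ.symm hnβ
  obtain ⟨-, hfree'⟩ := hregular (β * x) (H.mul_mem hβH hxH) hγ (hβu.mul_left hxu)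
    (hcβ.symm.mul_left hcx.symm) hnγ
  obtain ⟨p⟩ : Nonempty Ω := Fintype.card_pos_iff.1 (by omega)
  obtain ⟨g, hg, hgp⟩ := htr p ((β * x) p)
  rcases mem_or_mul_mem_of_mem_sup_zpowers hβ (hcommK β hβu hcβ.symm) hg with h | h
  · have h1 : g * (β * x) = 1 := by
      refine hfree' _ (Subgroup.mul_mem _ (Subgroup.mem_sup_left h)
        (Subgroup.mem_sup_right (Subgroup.mem_zpowers _))) p ?_
      rw [mul_apply, ← hgp]
      exact apply_apply_of_sq_eq_one (hsqK g h) p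
    apply hnγ
    rw [eq_inv_of_mul_eq_one_right h1]
    exact (hKx g h).symm.inv_left
  · have h1 : (β * g) p = x p := by
      rw [mul_apply, hgp, mul_apply, apply_apply_of_sq_eq_one hβ]
    have h2 : u p = p := by
      have h3 := congrArg (fun f : Equiv.Perm Ω => f p) (hKx _ h).eq
      simp only [mul_apply x, mul_apply (β * g)] at h3
      rw [hu, pow_two, mul_apply, ← h1, h3, ← h1]
      exact apply_apply_of_sq_eq_one (hsqK _ h) p
    exact hx2 (hfree u (Subgroup.mem_sup_left huK) p h2)

namespace IsIndepString

variable {Ω : Type*} {k : ℕ} {α : Fin k → Equiv.Perm Ω}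

theorem commute_of_ne (hα : IsIndepString α) {i j : Fin k} (h : (i : ℕ) + 1 ≠ j)
    (h' : (j : ℕ) + 1 ≠ i) : Commute (α i) (α j) := by
  rcases lt_trichotomy (i : ℕ) j with hij | hij | hij
  · exact hα.commute i j (by omega)
  · rw [Fin.ext hij]
  · exact (hα.commute j i (by omega)).symm

theorem false_of_card_eq_eight (hα : IsIndepString α) [Fintype Ω] [DecidableEq Ω]
    (hΩ : Fintype.card Ω = 8) (hH : MulAction.IsPreprimitive (Subgroup.closure (Set.range α)) Ω)
    (hk : 5 ≤ k) (hlarge : ∀ g ∈ Subgroup.closure (Set.range α), g ^ 2 = 1 →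
      g.support.card ≤ 4 → g = 1) : False := by
  set H := Subgroup.closure (Set.range α) with hHdef
  have hmem : ∀ i, α i ∈ H := fun i => Subgroup.subset_closure ⟨i, rfl⟩
  set i₀ : Fin k := ⟨0, by omega⟩ with hi₀
  set i₁ : Fin k := ⟨1, by omega⟩ with hi₁
  set i₂ : Fin k := ⟨2, by omega⟩ with hi₂
  set i₃ : Fin k := ⟨3, by omega⟩ with hi₃
  set i₄ : Fin k := ⟨4, by omega⟩ with hi₄
  have h02 : Commute (α i₀) (α i₂) := hα.commute _ _ (by simp [hi₀, hi₂])
  have h03 : Commute (α i₀) (α i₃) := hα.commute _ _ (by simp [hi₀, hi₃])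
  have h04 : Commute (α i₀) (α i₄) := hα.commute _ _ (by simp [hi₀, hi₄])
  have h13 : Commute (α i₁) (α i₃) := hα.commute _ _ (by simp [hi₁, hi₃])
  have h14 : Commute (α i₁) (α i₄) := hα.commute _ _ (by simp [hi₁, hi₄])
  have h24 : Commute (α i₂) (α i₄) := hα.commute _ _ (by simp [hi₂, hi₄])
  have hx8 : (α i₀ * α i₁) ^ 8 = 1 := by
    obtain ⟨hsq, hcard⟩ := hα.card_closure_image {i₀, i₂, i₄} (by
      simp only [Finset.mem_insert, Finset.mem_singleton]
      rintro i (rfl | rfl | rfl) j (rfl | rfl | rfl) <;>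
        exact hα.commute_of_ne (by simp [hi₀, hi₂, hi₄]) (by simp [hi₀, hi₂, hi₄]))
    have hle : Subgroup.closure (α '' ({i₀, i₂, i₄} : Finset (Fin k))) ≤ H :=
      Subgroup.closure_mono (Set.image_subset_range _ _)
    obtain ⟨htr, -⟩ := regular_of_card_eq_eight hΩ hsq
      (by rw [hcard, Finset.card_insert_of_notMem, Finset.card_pair] <;> simp [hi₀, hi₂, hi₄])
      fun g hg => hlarge g (hle hg) (hsq g hg)
    refine mul_pow_eight_eq_one (b := α i₂) hΩ (hα.sq_eq_one _) (hα.sq_eq_one i₄)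
      (hα.sq_eq_one _) h04 h24 h14 fun p q => ?_
    obtain ⟨g, hg, rfl⟩ := htr p q
    simp only [Finset.coe_insert, Finset.coe_singleton, Set.image_insert_eq,
      Set.image_singleton] at hg
    obtain ⟨i, j, l, rfl⟩ := exists_eq_pow_mul_pow_mul_pow (hα.sq_eq_one _) (hα.sq_eq_one _)
      (hα.sq_eq_one _) h02 h04 h24 hg
    exact ⟨i, j, l, rfl⟩
  have hx2 := hα.mul_sq_ne_one (hα.not_commute_head (by omega) hH (by omega))
  set x := α i₀ * α i₁ with hx
  have hxH : x ∈ H := H.mul_mem (hmem _) (hmem _)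
  have hx3 : x ∈ Subgroup.closure (α '' {i₃}ᶜ) :=
    Subgroup.mul_mem _ (mem_closure_of_ne α (by simp [hi₀, hi₃]))
      (mem_closure_of_ne α (by simp [hi₁, hi₃]))
  have h3x : Commute (α i₃) x := h03.symm.mul_right h13.symm
  have hinv : α i₀ * x * α i₀ = x⁻¹ := by
    rw [hx, mul_inv_rev, hα.inv_eq, hα.inv_eq, ← mul_assoc, ← pow_two, hα.sq_eq_one, one_mul]
  by_cases hx4 : x ^ 4 = 1
  · refine false_of_dihedral hΩ hlarge (hmem i₀) hxH (hmem i₃) (hα.sq_eq_one _) (hα.sq_eq_one _)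
      hinv hx4 hx2 h03.symm h3x (hα.ne_one _) fun h => hα.notMem i₃ ?_
    rw [h]
    exact Subgroup.pow_mem _ hx3 2
  · refine false_of_dihedral hΩ hlarge (hmem i₀) (H.pow_mem hxH 2) (hmem i₃) (hα.sq_eq_one _)
      (hα.sq_eq_one _) ?_ (by rw [← pow_mul, hx8]) (by rwa [← pow_mul]) h03.symm
      (h3x.pow_right 2) (hα.ne_one _) fun h => hα.notMem i₃ ?_
    · rw [← inv_pow, ← hinv, pow_two, pow_two]
      have : α i₀ * α i₀ = 1 := by rw [← pow_two, hα.sq_eq_one]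
      simp only [mul_assoc]
      rw [← mul_assoc (α i₀) (α i₀), this, one_mul]
    · rw [h]
      exact Subgroup.pow_mem _ (Subgroup.pow_mem _ hx3 2) 2

end IsIndepString

namespace IsIndepString

variable {Ω : Type*} {k : ℕ} {α : Fin k → Equiv.Perm Ω} [Fintype Ω] [DecidableEq Ω]

/-- On nine points, three commuting generators have a common unique fixed point unless they
generate a nontrivial element of degree at most four. -/
theorem exists_forall_apply_eq_iff (hα : IsIndepString α) (hΩ : Fintype.card Ω = 9)
    (hlarge : ∀ g ∈ Subgroup.closure (Set.range α), g ^ 2 = 1 → g.support.card ≤ 4 → g = 1)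
    {i j l : Fin k} (hij : (i : ℕ) + 1 < j) (hjl : (j : ℕ) + 1 < l) :
    ∃ q, (∀ p, α i p = p ↔ p = q) ∧ (∀ p, α j p = p ↔ p = q) ∧ ∀ p, α l p = p ↔ p = q := by
  have hcomm : ∀ a ∈ ({i, j, l} : Finset (Fin k)), ∀ b ∈ ({i, j, l} : Finset (Fin k)),
      Commute (α a) (α b) := by
    simp only [Finset.mem_insert, Finset.mem_singleton]
    rintro a (rfl | rfl | rfl) b (rfl | rfl | rfl) <;>
      exact hα.commute_of_ne (by omega) (by omega)
  obtain ⟨hsq, hcard⟩ := hα.card_closure_image {i, j, l} hcomm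
  rw [Finset.card_insert_of_notMem, Finset.card_pair] at hcard
  rotate_left
  · exact Fin.ne_of_val_ne (by omega)
  · simp only [Finset.mem_insert, Finset.mem_singleton, Fin.ext_iff]
    omega
  set E := Subgroup.closure (α '' ({i, j, l} : Finset (Fin k))) with hE
  have hmemE : ∀ a ∈ ({i, j, l} : Finset (Fin k)), α a ∈ E := fun a ha =>
    Subgroup.subset_closure ⟨a, ha, rfl⟩
  rcases exists_card_support_le_four_or_regular hsq hcard (by omega) (by omega) with
    ⟨g, hg, hg1, h4⟩ | ⟨-, p, hp, hfree⟩
  · exact absurd (hlarge g (Subgroup.closure_mono (Set.image_subset_range _ _) hg)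
      (hsq g hg) h4) hg1
  have hcompl : (orbitFinset E p)ᶜ.card = 1 := by
    rw [Finset.card_compl, hΩ, hp]
  obtain ⟨q, hq⟩ := Finset.card_eq_one.1 hcompl
  have hqmem : ∀ x, x ∉ orbitFinset E p ↔ x = q := fun x => by
    rw [← Finset.mem_compl, hq, Finset.mem_singleton]
  have hfix : ∀ a ∈ ({i, j, l} : Finset (Fin k)), ∀ x, α a x = x ↔ x = q := by
    intro a ha x
    rw [← hqmem]
    refine ⟨fun h hx => hα.ne_one a (hfree _ (hmemE a ha) x hx h), fun hx => ?_⟩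
    have h1 := (hqmem _).1 (notMem_of_orbitFinset (hmemE a ha) hx)
    rw [h1, (hqmem x).1 hx]
  exact ⟨q, hfix i (by simp), hfix j (by simp), hfix l (by simp)⟩

theorem false_of_card_eq_nine (hα : IsIndepString α) (hΩ : Fintype.card Ω = 9)
    (hH : MulAction.IsPreprimitive (Subgroup.closure (Set.range α)) Ω) (hk : k = 6)
    (hlarge : ∀ g ∈ Subgroup.closure (Set.range α), g ^ 2 = 1 → g.support.card ≤ 4 → g = 1) :
    False := by
  subst hk
  obtain ⟨q, h0, h2, h4⟩ := hα.exists_forall_apply_eq_iff hΩ hlarge (i := 0) (j := 2) (l := 4)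
    (by decide) (by decide)
  obtain ⟨q', h0', -, h5⟩ := hα.exists_forall_apply_eq_iff hΩ hlarge (i := 0) (j := 2) (l := 5)
    (by decide) (by decide)
  obtain rfl := (h0 q').1 ((h0' q').2 rfl)
  obtain ⟨q, -, h3, h5'⟩ := hα.exists_forall_apply_eq_iff hΩ hlarge (i := 0) (j := 3) (l := 5)
    (by decide) (by decide)
  obtain rfl := (h5 q).1 ((h5' q).2 rfl)
  obtain ⟨q', h1, -, h5''⟩ := hα.exists_forall_apply_eq_iff hΩ hlarge (i := 1) (j := 3) (l := 5)
    (by decide) (by decide)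
  obtain rfl := (h5 q').1 ((h5'' q').2 rfl)
  have hle : Subgroup.closure (Set.range α) ≤ MulAction.stabilizer (Equiv.Perm Ω) q' := by
    rw [Subgroup.closure_le]
    rintro _ ⟨i, rfl⟩
    rw [SetLike.mem_coe, MulAction.mem_stabilizer_iff]
    change α i q' = q'
    fin_cases i
    exacts [(h0 q').2 rfl, (h1 q').2 rfl, (h2 q').2 rfl, (h3 q').2 rfl, (h4 q').2 rfl,
      (h5 q').2 rfl]
  obtain ⟨p, hp⟩ : ∃ p, p ≠ q' := by
    have : Nontrivial Ω := Fintype.one_lt_card_iff_nontrivial.1 (by omega)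
    exact exists_ne q'
  obtain ⟨⟨g, hg⟩, hgp⟩ := hH.exists_smul_eq q' p
  exact hp (hgp.symm.trans (MulAction.mem_stabilizer_iff.1 (hle hg)))

theorem exists_card_support_le_four (hα : IsIndepString α) (hΩ : 7 ≤ Fintype.card Ω)
    (hk : Fintype.card Ω ≤ k + 3)
    (hH : MulAction.IsPreprimitive (Subgroup.closure (Set.range α)) Ω) :
    ∃ g ∈ Subgroup.closure (Set.range α), g ^ 2 = 1 ∧ g ≠ 1 ∧ g.support.card ≤ 4 := by
  by_contra hcon
  have hlarge : ∀ g ∈ Subgroup.closure (Set.range α), g ^ 2 = 1 →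
      g.support.card ≤ 4 → g = 1 := fun g hg h2 h4 => by
    by_contra h1
    exact hcon ⟨g, hg, h2, h1, h4⟩
  let f : Fin ((k + 1) / 2) ↪ Fin k :=
    ⟨fun i => ⟨2 * i, by omega⟩, fun i j h => by
      simp only [Fin.mk.injEq] at h
      exact Fin.ext (by omega)⟩
  have hf : ∀ i, (f i : ℕ) = 2 * i := fun _ => rfl
  obtain ⟨hsq, hcard⟩ := hα.card_closure_image (Finset.univ.map f) (by
    simp only [Finset.mem_map, Finset.mem_univ, true_and]
    rintro _ ⟨i, rfl⟩ _ ⟨j, rfl⟩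
    exact hα.commute_of_ne (by rw [hf, hf]; omega) (by rw [hf, hf]; omega))
  rw [Finset.card_map, Finset.card_univ, Fintype.card_fin] at hcard
  rcases exists_card_support_le_four_or_regular hsq hcard (by omega) (by omega) with
    ⟨g, hg, hg1, h4⟩ | ⟨hj, p, hp, -⟩
  · exact hg1 (hlarge g (Subgroup.closure_mono (Set.image_subset_range _ _) hg) (hsq g hg) h4)
  · have h8 : 8 ≤ Fintype.card Ω := hp ▸ Finset.card_le_univ _
    rcases h8.eq_or_lt with h | h
    · exact hα.false_of_card_eq_eight h.symm hH (by omega) hlarge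
    · exact hα.false_of_card_eq_nine (by omega) hH (by omega) hlarge

/-- A primitive group of degree at least seven generated by an independent string of involutions
whose length is at least the degree minus three contains the alternating group. -/
theorem alternatingGroup_le (hα : IsIndepString α) (hΩ : 7 ≤ Fintype.card Ω)
    (hk : Fintype.card Ω ≤ k + 3)
    (hH : MulAction.IsPreprimitive (Subgroup.closure (Set.range α)) Ω) :
    alternatingGroup Ω ≤ Subgroup.closure (Set.range α) := by
  by_contra hcon
  have hsmall : ∀ g ∈ Subgroup.closure (Set.range α), g.support.card ≤ 3 → g = 1 := by
    intro g hg h3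
    by_contra h1
    exact hcon (alternatingGroup_le_of_card_support_le_three hH hg h1 h3)
  obtain ⟨g, hg, hg2, hg1, h4⟩ := hα.exists_card_support_le_four hΩ hk hH
  have hA : IsTetrad (Subgroup.closure (Set.range α)) g.support :=
    ⟨le_antisymm h4 (by
      by_contra h
      exact hg1 (hsmall g hg (by omega))), g, hg, hg2, rfl⟩
  obtain ⟨l, M, hinj, hadd, hmap, hlin⟩ := exists_affine_structure hH hΩ hsmall hA
  rcases hΩ.eq_or_lt with h | h
  · exact hα.false_of_linear (by omega) hH (by omega) ⟨hinj, hadd, hmap⟩ (hlin h.symm)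
  · exact hα.false_of_isAffineAction (by omega) hH (by omega) ⟨hinj, hadd, hmap⟩

end IsIndepString

/-- The group induced on a block system with maximal blocks is primitive. -/
theorem isPreprimitive_of_maximal_fibers {ι X Y : Type*} {ρ : ι → Equiv.Perm X}
    {π : ι → Equiv.Perm Y} {b : X → Y} (hb : Function.Surjective b)
    (hπ : ∀ i x, b (ρ i x) = π i (b x))
    (htrans : MulAction.IsPretransitive (Subgroup.closure (Set.range ρ)) X)
    (hmax : ∀ (c : Y) (S : Set X), MulAction.IsBlock (Subgroup.closure (Set.range ρ)) S →
      {x | b x = c} ⊆ S → S = {x | b x = c} ∨ S = Set.univ) :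
    MulAction.IsPreprimitive (Subgroup.closure (Set.range π)) Y := by
  have hlift : ∀ g ∈ Subgroup.closure (Set.range ρ), ∃ h ∈ Subgroup.closure (Set.range π),
      ∀ x, b (g x) = h (b x) := by
    intro g hg
    induction hg using Subgroup.closure_induction with
    | mem x hx =>
      obtain ⟨i, rfl⟩ := hx
      exact ⟨π i, Subgroup.subset_closure ⟨i, rfl⟩, hπ i⟩
    | one => exact ⟨1, Subgroup.one_mem _, fun _ => rfl⟩
    | mul x y _ _ ihx ihy =>
      obtain ⟨h, hh, hx⟩ := ihx
      obtain ⟨h', hh', hy⟩ := ihy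
      exact ⟨h * h', Subgroup.mul_mem _ hh hh', fun p => by rw [mul_apply, mul_apply, hx, hy]⟩
    | inv x _ ih =>
      obtain ⟨h, hh, hx⟩ := ih
      refine ⟨h⁻¹, Subgroup.inv_mem _ hh, fun p => ?_⟩
      rw [eq_inv_iff_eq, ← hx]
      simp
  have hpre : MulAction.IsPretransitive (Subgroup.closure (Set.range π)) Y := by
    refine ⟨fun c d => ?_⟩
    obtain ⟨x, rfl⟩ := hb c
    obtain ⟨y, rfl⟩ := hb d
    obtain ⟨⟨g, hg⟩, rfl⟩ := htrans.exists_smul_eq x y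
    obtain ⟨h, hh, hgh⟩ := hlift g hg
    exact ⟨⟨h, hh⟩, (hgh x).symm⟩
  refine ⟨fun {S} hS => ?_⟩
  rcases S.eq_empty_or_nonempty with rfl | ⟨c, hc⟩
  · exact Or.inl Set.subsingleton_empty
  have hblock : MulAction.IsBlock (Subgroup.closure (Set.range ρ)) (b ⁻¹' S) := by
    rw [MulAction.isBlock_iff_smul_eq_of_mem] at hS ⊢
    rintro ⟨g, hg⟩ x hx hgx
    obtain ⟨h, hh, hgh⟩ := hlift g hg
    have hhS := hS (g := ⟨h, hh⟩) hx (by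
      change h (b x) ∈ S
      rw [← hgh]
      exact hgx)
    ext y
    rw [Set.mem_smul_set_iff_inv_smul_mem, Set.mem_preimage, Set.mem_preimage]
    conv_rhs => rw [← hhS]
    rw [Set.mem_smul_set_iff_inv_smul_mem]
    have : h⁻¹ (b y) = b (g⁻¹ y) := by
      rw [inv_eq_iff_eq, ← hgh]
      simp
    change b (g⁻¹ y) ∈ S ↔ h⁻¹ (b y) ∈ S
    rw [this]
  rcases hmax c (b ⁻¹' S) hblock (fun x (hx : b x = c) => by
    rw [Set.mem_preimage, hx]
    exact hc) with h | h
  · left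
    have hSc : ∀ d ∈ S, d = c := by
      intro d hd
      obtain ⟨x, rfl⟩ := hb d
      have : x ∈ b ⁻¹' S := hd
      rwa [h] at this
    exact fun d hd d' hd' => (hSc d hd).trans (hSc d' hd').symm
  · right
    refine Set.eq_univ_of_forall fun d => ?_
    obtain ⟨x, rfl⟩ := hb d
    have : x ∈ b ⁻¹' S := h ▸ Set.mem_univ x
    exact this

theorem isIndepString_orderEmbOfFin {r k : ℕ} {Ω : Type*} {π : Fin r → Equiv.Perm Ω}
    (hsq : ∀ i, π i ^ 2 = 1) (hcomm : ∀ i j : Fin r, (i : ℕ) + 1 < j → Commute (π i) (π j))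
    (s : Finset (Fin r)) (hk : s.card = k)
    (hind : ∀ i ∈ s, π i ∉ Subgroup.closure (π '' (s \ {i} : Set (Fin r)))) :
    IsIndepString (π ∘ s.orderEmbOfFin hk) where
  sq_eq_one _ := hsq _
  commute i j hij := by
    refine hcomm _ _ ?_
    have h1 : i < ⟨i + 1, by omega⟩ := Fin.lt_def.2 (Nat.lt_succ_self _)
    have h2 : (⟨i + 1, by omega⟩ : Fin k) < j := Fin.lt_def.2 hij
    have h1' := Fin.lt_def.1 ((s.orderEmbOfFin hk).strictMono h1)
    have h2' := Fin.lt_def.1 ((s.orderEmbOfFin hk).strictMono h2)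
    omega
  notMem i h := by
    refine hind _ (s.orderEmbOfFin_mem hk i) (Subgroup.closure_mono ?_ h)
    rintro _ ⟨j, hj, rfl⟩
    exact ⟨_, ⟨s.orderEmbOfFin_mem hk j, fun h => hj ((s.orderEmbOfFin hk).injective h)⟩, rfl⟩

theorem stmt12 {n r m : ℕ} (hm7 : 7 ≤ m) (hn : n = 2 * m) (hr : n / 2 ≤ r)
    (ρ : Fin r → Equiv.Perm (Fin n)) (hstring : IsStringC ρ)
    (htrans : MulAction.IsPretransitive ↥(Subgroup.closure (Set.range ρ)) (Fin n))
    (b : Fin n → Fin m) (hbsurj : Function.Surjective b)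
    (hfib : ∀ c : Fin m, Set.ncard {x | b x = c} = 2)
    (hcompat : ∀ g ∈ Subgroup.closure (Set.range ρ), ∀ x y : Fin n,
      b x = b y → b (g x) = b (g y))
    -- every fiber of b is a maximal block
    (hmax : ∀ (c : Fin m) (X : Set (Fin n)),
      MulAction.IsBlock ↥(Subgroup.closure (Set.range ρ)) X →
      {x | b x = c} ⊆ X → X = {x | b x = c} ∨ X = Set.univ)
    -- π l is the induced block permutation φ (ρ l)
    (π : Fin r → Equiv.Perm (Fin m))
    (hπ : ∀ (l : Fin r) (x : Fin n), b (ρ l x) = π l (b x))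
    -- L generates the image of φ independently
    (L : Set (Fin r))
    (hLgen : Subgroup.closure (π '' L) = Subgroup.closure (Set.range π))
    (hLind : ∀ l ∈ L, π l ∉ Subgroup.closure (π '' (L \ {l})))
    -- |R ∪ C| = 3
    (hRC : ({i : Fin r | i ∉ L ∧ ¬ ∀ l ∈ L, Commute (ρ i) (ρ l)} ∪
            {i : Fin r | i ∉ L ∧ ∀ l ∈ L, Commute (ρ i) (ρ l)}).ncard = 3) :
    Subgroup.closure (Set.range π) = ⊤ ∨
      Subgroup.closure (Set.range π) = alternatingGroup (Fin m) := by
  have hlift : ∀ {g : Equiv.Perm (Fin n)} {h : Equiv.Perm (Fin m)}, (∀ x, b (g x) = h (b x)) →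
      g = 1 → h = 1 := by
    intro g h hgh hg
    ext1 c
    obtain ⟨x, rfl⟩ := hbsurj c
    rw [← hgh, hg]
    rfl
  have hsq : ∀ i, π i ^ 2 = 1 := fun i => hlift (g := ρ i ^ 2) (fun x => by
    rw [pow_two, pow_two, mul_apply, mul_apply, hπ, hπ])
    (by rw [← hstring.1.1 i, pow_orderOf_eq_one])
  have hinv : ∀ i, (π i)⁻¹ = π i := fun i =>
    inv_eq_of_mul_eq_one_right (by rw [← pow_two, hsq])
  have hcomm : ∀ i j : Fin r, (i : ℕ) + 1 < j → Commute (π i) (π j) := by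
    intro i j hij
    have h1 : (π i * π j) ^ 2 = 1 := hlift (g := (ρ i * ρ j) ^ 2) (fun x => by
      simp only [pow_two, mul_apply, hπ]) (hstring.1.2 i j (by
        rw [abs_sub_comm, lt_abs]
        left
        omega))
    have h2 : (π i * π j)⁻¹ = π i * π j := inv_eq_of_mul_eq_one_right (by rw [← pow_two, h1])
    rw [mul_inv_rev, hinv, hinv] at h2
    exact h2.symm
  classical
  have hL : m ≤ L.toFinset.card + 3 := by
    have hset : ({i : Fin r | i ∉ L ∧ ¬ ∀ l ∈ L, Commute (ρ i) (ρ l)} ∪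
        {i : Fin r | i ∉ L ∧ ∀ l ∈ L, Commute (ρ i) (ρ l)}) = Lᶜ := by
      ext i
      simp only [Set.mem_union, Set.mem_ofPred_eq, Set.mem_compl_iff]
      tauto
    rw [hset] at hRC
    have := Set.ncard_add_ncard_compl L
    rw [hRC, Nat.card_eq_fintype_card, Fintype.card_fin, Set.ncard_eq_toFinset_card'] at this
    omega
  have hα := isIndepString_orderEmbOfFin hsq hcomm L.toFinset rfl (by simpa using hLind)
  have hrange : Set.range (π ∘ L.toFinset.orderEmbOfFin rfl) = π '' L := by
    rw [Set.range_comp, Finset.range_orderEmbOfFin, Set.coe_toFinset]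
  have hprim := isPreprimitive_of_maximal_fibers hbsurj hπ htrans hmax
  rw [← hLgen, ← hrange] at hprim ⊢
  exact eq_top_or_eq_alternatingGroup (hα.alternatingGroup_le (by simpa using hm7)
    (by simpa using hL) hprim)
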